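/- Assume m+1 ≠ n. The kernel of φ_{R_1} : U(gl(m+1|n)) → D'(m|n)⊗U(gl(m|n)) is the two-sided ideal (G_1) of U(gl(m+1|n)) generated by the first Gelfand invariant G_1^{gl(m+1|n)} = Σ_{i∈Î} e_{ii}. -/

import Mathlib

set_option maxHeartbeats 1000000
set_option synthInstance.maxHeartbeats 400000

noncomputable section
open scoped TensorProduct

/-- The index set `I = {1,…,m,1̄,…,n̄}` of `gl(m|n)`; `Sum.inl` are the even
(unbarred) indices, `Sum.inr` the odd (barred) ones.  The index set
`Î = {0} ∪ I` of `gl(m+1|n)` is realized as `Ind (m+1) n`, with `0 = Sum.inl 0`. -/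
abbrev Ind (m n : ℕ) := Fin m ⊕ Fin n

/-- Parity of an index, as `0` or `1`. -/
def pI {m n : ℕ} : Ind m n → ℕ := Sum.elim (fun _ => 0) (fun _ => 1)

/-- The total order `1 < ⋯ < m < 1̄ < ⋯ < n̄` on `I` (and, with `m+1` in place of `m`,
the order `0 < 1 < ⋯ < m < 1̄ < ⋯ < n̄` on `Î`). -/
def iltI {m n : ℕ} : Ind m n → Ind m n → Prop
  | Sum.inl a, Sum.inl b => a < b
  | Sum.inl _, Sum.inr _ => True
  | Sum.inr _, Sum.inl _ => False
  | Sum.inr a, Sum.inr b => a < b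

/-- The distinguished index `0` of `Î`. -/
def z0 {m n : ℕ} : Ind (m+1) n := Sum.inl 0

/-- The inclusion `I ↪ Î`. -/
def emb {m n : ℕ} : Ind m n → Ind (m+1) n := Sum.map Fin.succ id

lemma emb_injective {m n : ℕ} : Function.Injective (emb (m := m) (n := n)) := by
  intro a b h
  cases a <;> cases b <;> simp [emb, Fin.succ_inj] at h <;> simp [h]

lemma emb_ne_z0 {m n : ℕ} (a : Ind m n) : emb a ≠ z0 := by
  cases a <;> simp [emb, z0, Fin.succ_ne_zero]

/-- Builds a linear map out of a space with basis `α` from a function on basis vectors. -/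
def mkOp {α M : Type} [AddCommGroup M] [Module ℂ M] (g : α → M) : (α →₀ ℂ) →ₗ[ℂ] M :=
  Finsupp.lsum ℂ fun x => LinearMap.toSpanSingleton ℂ M (g x)

/-- Number of odd variables occurring before position `i`. -/
def cntB {n : ℕ} (b : Fin n → Bool) (i : Fin n) : ℕ :=
  (Finset.univ.filter fun j => j < i ∧ b j = true).card

/-- Number of odd variables occurring. -/
def cntA {n : ℕ} (b : Fin n → Bool) : ℕ := (Finset.univ.filter fun j => b j = true).card

/-- The defining (super-)commutation relations of `gl`:
`e_ij e_kl − (−1)^{(|i|+|j|)(|k|+|l|)} e_kl e_ij = δ_jk e_il − (−1)^{(|i|+|j|)(|k|+|l|)} δ_li e_kj`. -/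
inductive glRel (ι : Type) (p : ι → ℕ) [DecidableEq ι] :
    FreeAlgebra ℂ (ι × ι) → FreeAlgebra ℂ (ι × ι) → Prop
  | basic (i j k l : ι) : glRel ι p
      (FreeAlgebra.ι ℂ (i, j) * FreeAlgebra.ι ℂ (k, l)
        - ((-1 : ℂ) ^ ((p i + p j) * (p k + p l))) •
            (FreeAlgebra.ι ℂ (k, l) * FreeAlgebra.ι ℂ (i, j)))
      ((if j = k then FreeAlgebra.ι ℂ (i, l) else 0)
        - ((-1 : ℂ) ^ ((p i + p j) * (p k + p l))) •
            (if l = i then FreeAlgebra.ι ℂ (k, j) else 0))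

/-- The universal enveloping superalgebra of the general linear Lie superalgebra with
index set `ι` and parity `p`, presented by generators `e_ij` and the super-commutator
relations. -/
abbrev UEA (ι : Type) (p : ι → ℕ) [DecidableEq ι] : Type := RingQuot (glRel ι p)

/-- The generator `e_ij` of `UEA ι p`. -/
def gen {ι : Type} (p : ι → ℕ) [DecidableEq ι] (i j : ι) : UEA ι p :=
  RingQuot.mkAlgHom ℂ (glRel ι p) (FreeAlgebra.ι ℂ (i, j))

/-- Monomials `t_0^{k} t^e t̄^b` of `F = ℂ[t_0^{±1},t_1,…,t_m] ⊗ Λ_n`. -/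
abbrev FMon (m n : ℕ) := ℤ × (Fin m → ℕ) × (Fin n → Bool)

/-- `F = ℂ[t_0^{±1},t_1,…,t_m] ⊗ Λ_n` as the vector space with basis the monomials. -/
abbrev FSp (m n : ℕ) : Type := FMon m n →₀ ℂ

/-- The basis monomial of `F` attached to `x`. -/
def fmono {m n : ℕ} (x : FMon m n) : FSp m n := Finsupp.single x 1

/-- Left multiplication by `t_i/t_0` for an even index `i ∈ {1,…,m}`. -/
def opDivE {m n : ℕ} (i : Fin m) : Module.End ℂ (FSp m n) :=
  mkOp fun x => fmono (x.1 - 1, Function.update x.2.1 i (x.2.1 i + 1), x.2.2)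

/-- Left multiplication by `t_ī/t_0` for an odd index `ī`. -/
def opDivO {m n : ℕ} (i : Fin n) : Module.End ℂ (FSp m n) :=
  mkOp fun x => if x.2.2 i then 0 else
    ((-1 : ℂ) ^ (cntB x.2.2 i)) • fmono (x.1 - 1, x.2.1, Function.update x.2.2 i true)

/-- The operator `t_0 ∂_0`. -/
def opPar0 {m n : ℕ} : Module.End ℂ (FSp m n) :=
  mkOp fun x => (x.1 : ℂ) • fmono x

/-- The operator `t_0 ∂_i` for an even index `i ∈ {1,…,m}`. -/
def opParE {m n : ℕ} (i : Fin m) : Module.End ℂ (FSp m n) :=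
  mkOp fun x => (x.2.1 i : ℂ) • fmono (x.1 + 1, Function.update x.2.1 i (x.2.1 i - 1), x.2.2)

/-- The operator `t_0 ∂_ī` for an odd index `ī`. -/
def opParO {m n : ℕ} (i : Fin n) : Module.End ℂ (FSp m n) :=
  mkOp fun x => if x.2.2 i then
    ((-1 : ℂ) ^ (cntB x.2.2 i)) • fmono (x.1 + 1, x.2.1, Function.update x.2.2 i false) else 0

/-- The multiplication operators `t_i/t_0`, `i ∈ I`. -/
def opDiv {m n : ℕ} : Ind m n → Module.End ℂ (FSp m n) := Sum.elim opDivE opDivO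

/-- The operators `t_0 ∂_i`, `i ∈ Î`. -/
def opPar {m n : ℕ} : Ind (m+1) n → Module.End ℂ (FSp m n) :=
  Sum.elim (Fin.cases opPar0 opParE) opParO

/-- The multiplication operators `t_i/t_0` for `i ∈ Î` (equal to `1` for `i = 0`). -/
def opDivB {m n : ℕ} : Ind (m+1) n → Module.End ℂ (FSp m n) :=
  Sum.elim (Fin.cases 1 opDivE) opDivO

/-- The generators of `D'(m|n)`. -/
def Dgens (m n : ℕ) : Set (Module.End ℂ (FSp m n)) := Set.range opDiv ∪ Set.range opPar

/-- The superalgebra `D'(m|n)` of differential operators on `F`, i.e. the subalgebra of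
operators on `F` generated by `t_i/t_0` (`i ∈ I`) and `t_0∂_i` (`i ∈ Î`). -/
def Dprime (m n : ℕ) : Subalgebra ℂ (Module.End ℂ (FSp m n)) := Algebra.adjoin ℂ (Dgens m n)

/-- `t_i/t_0` as an element of `D'(m|n)`. -/
def tdiv {m n : ℕ} (i : Ind m n) : Dprime m n :=
  ⟨opDiv i, Algebra.subset_adjoin (Or.inl ⟨i, rfl⟩)⟩

/-- `t_0∂_i` as an element of `D'(m|n)`. -/
def tpar {m n : ℕ} (i : Ind (m+1) n) : Dprime m n :=
  ⟨opPar i, Algebra.subset_adjoin (Or.inr ⟨i, rfl⟩)⟩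

/-- `t_i/t_0` for `i ∈ Î` as an element of `D'(m|n)`. -/
def tdivB {m n : ℕ} : Ind (m+1) n → Dprime m n :=
  Sum.elim (Fin.cases 1 fun i => tdiv (Sum.inl i)) fun i => tdiv (Sum.inr i)

/-- The operator `t_a∂_b = (t_a/t_0)(t_0∂_b)` of `D'(m|n)`, for `a, b ∈ Î`. -/
def tdel {m n : ℕ} (a b : Ind (m+1) n) : Dprime m n := tdivB a * tpar b

/-- The Euler operator `E = Σ_{i∈Î} t_i∂_i ∈ D'(m|n)`. -/
def En (m n : ℕ) : Dprime m n := ∑ i : Ind (m+1) n, tdel i i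

noncomputable instance instDprimeRing (m n : ℕ) : Ring (Dprime m n) :=
  @Subalgebra.toRing ℂ (Module.End ℂ (FSp m n)) inferInstance inferInstance inferInstance _

noncomputable instance instDprimeAlgebra (m n : ℕ) : Algebra ℂ (Dprime m n) :=
  @Subalgebra.algebra ℂ (Module.End ℂ (FSp m n)) inferInstance inferInstance inferInstance _

/-- The super tensor product `D'(m|n) ⊗ U(gl(m|n))`, axiomatized: an algebra `T` together
with algebra maps `d ↦ d⊗1`, `u ↦ 1⊗u`, such that the induced linear map
`D'(m|n) ⊗_ℂ U(gl(m|n)) → T` is a linear isomorphism and such that the Koszul sign rule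
`(1⊗u)(d⊗1) = (−1)^{|u||d|}(d⊗1)(1⊗u)` holds on (super-)generators. -/
structure SuperTensor (m n : ℕ) where
  T : Type
  [ringT : Ring T]
  [algT : Algebra ℂ T]
  inD : Dprime m n →ₐ[ℂ] T
  inU : UEA (Ind m n) pI →ₐ[ℂ] T
  equiv : ((Dprime m n) ⊗[ℂ] (UEA (Ind m n) pI)) ≃ₗ[ℂ] T
  equiv_tmul : ∀ (d : Dprime m n) (u : UEA (Ind m n) pI), equiv (d ⊗ₜ u) = inD d * inU u
  comm_div : ∀ (i j k : Ind m n),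
    inU (gen pI i j) * inD (tdiv k) =
      ((-1 : ℂ) ^ ((pI i + pI j) * pI k)) • (inD (tdiv k) * inU (gen pI i j))
  comm_par : ∀ (i j : Ind m n) (k : Ind (m+1) n),
    inU (gen pI i j) * inD (tpar k) =
      ((-1 : ℂ) ^ ((pI i + pI j) * pI k)) • (inD (tpar k) * inU (gen pI i j))

attribute [instance] SuperTensor.ringT SuperTensor.algT

/-- The predicate expressing that `φ : U(gl(m+1|n)) → D'(m|n) ⊗ U(gl(m|n))` is given on the
generators `e_ab` by the formulas of Theorem 3.1 (for the central element `R`). -/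
def IsPhi {m n : ℕ} (ST : SuperTensor m n) (R : ST.T)
    (φ : UEA (Ind (m+1) n) pI →ₐ[ℂ] ST.T) : Prop :=
  (∀ a b : Ind m n, φ (gen pI (emb a) (emb b)) =
      ST.inD (tdel (emb a) (emb b)) + ST.inU (gen pI a b)
        + (if a = b then ((-1 : ℂ) ^ (pI a * pI b)) • R else 0)) ∧
  (∀ a : Ind m n, φ (gen pI (emb a) z0) =
      ST.inD (tdel (emb a) z0)
        - ∑ j : Ind m n, ((-1 : ℂ) ^ (pI a * pI j)) • (ST.inD (tdiv j) * ST.inU (gen pI a j))) ∧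
  (∀ b : Ind m n, φ (gen pI z0 (emb b)) = ST.inD (tdel z0 (emb b))) ∧
  (φ (gen pI z0 z0) = ST.inD (tdel z0 z0) + R)

/-- The generating set of `U(sl(m+1|n))` inside `U(gl(m+1|n))`: the `e_ij` with `i ≠ j`
together with `e_00 − (−1)^{|a|} e_aa` for `a ∈ I`. -/
def slSet (m n : ℕ) : Set (UEA (Ind (m+1) n) pI) :=
  {x | (∃ i j : Ind (m+1) n, i ≠ j ∧ x = gen pI i j) ∨
    (∃ a : Ind m n, x = gen pI z0 z0 - ((-1 : ℂ) ^ (pI a)) • gen pI (emb a) (emb a))}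

/-- `U(sl(m+1|n))`, realized as the subalgebra of `U(gl(m+1|n))` generated by `sl(m+1|n)`. -/
def Usl (m n : ℕ) : Subalgebra ℂ (UEA (Ind (m+1) n) pI) := Algebra.adjoin ℂ (slSet m n)

lemma mem_gen_ne {m n : ℕ} {i j : Ind (m+1) n} (h : i ≠ j) : gen pI i j ∈ Usl m n :=
  Algebra.subset_adjoin (Or.inl ⟨i, j, h, rfl⟩)

lemma mem_h {m n : ℕ} (a : Ind m n) :
    gen pI z0 z0 - ((-1 : ℂ) ^ (pI a)) • gen pI (emb a) (emb a) ∈ Usl m n :=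
  Algebra.subset_adjoin (Or.inr ⟨a, rfl⟩)

/-- The predicate expressing that `ψ : U(sl(m+1|n)) → D'(m|n) ⊗ U(gl(m|n))` is given on the
generators by the formulas of Corollary 3.2 (the homomorphism `φ^s`). -/
def IsPhiS {m n : ℕ} (ST : SuperTensor m n) (ψ : Usl m n →ₐ[ℂ] ST.T) : Prop :=
  (∀ (a b : Ind m n) (h : a ≠ b),
    ψ ⟨gen pI (emb a) (emb b), mem_gen_ne fun he => h (emb_injective he)⟩ =
      ST.inD (tdel (emb a) (emb b)) + ST.inU (gen pI a b)) ∧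
  (∀ a : Ind m n, ψ ⟨gen pI (emb a) z0, mem_gen_ne (emb_ne_z0 a)⟩ =
      ST.inD (tdel (emb a) z0)
        - ∑ j : Ind m n, ((-1 : ℂ) ^ (pI a * pI j)) • (ST.inD (tdiv j) * ST.inU (gen pI a j))) ∧
  (∀ b : Ind m n, ψ ⟨gen pI z0 (emb b), mem_gen_ne (Ne.symm (emb_ne_z0 b))⟩ =
      ST.inD (tdel z0 (emb b))) ∧
  (∀ a : Ind m n, ψ ⟨gen pI z0 z0 - ((-1 : ℂ) ^ (pI a)) • gen pI (emb a) (emb a), mem_h a⟩ =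
      ST.inD (tdel (m:=m) (n:=n) z0 z0 - ((-1 : ℂ) ^ (pI a)) • tdel (emb a) (emb a))
        - ((-1 : ℂ) ^ (pI a)) • ST.inU (gen pI a a))

/-- The first Gelfand invariant `G₁ = Σ_i e_ii`. -/
def G1 (ι : Type) (p : ι → ℕ) [DecidableEq ι] [Fintype ι] : UEA ι p := ∑ i : ι, gen p i i

/-- The distinguished central element `R₁ = −(1/(m−n+1))(E⊗1 + 1⊗G₁)`. -/
def R1elt {m n : ℕ} (ST : SuperTensor m n) : ST.T :=
  -(1 / ((m : ℂ) - n + 1)) • (ST.inD (En m n) + ST.inU (G1 (Ind m n) pI))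

/-
The formulas for `φ` and the definition of `R_1` give `φ(G_1) = 0`. Since `m + 1 ≠ n`, `G_1` and
`sl(m+1|n)` span `gl(m+1|n)`, so by the spanning half of the PBW theorem `U(gl(m+1|n))` is the sum
of `(G_1)` and the span of the ordered monomials in a basis of `sl(m+1|n)`. It remains to see that
`φ` maps these monomials to linearly independent elements.

For this, let `D'(m|n) ⊗ U(gl(m|n))` act on `F ⊗ F'`, where `F'` is the space of functions of a
matrix of variables `t_{ij}`, `i, j ∈ I`, shifted so that `e_{ij}` acts on `F'` as
`∂_{ij} + ∑ k, t_{ki} ∂_{kj}`. Up to operators lowering a suitable weight of the monomials of `F'`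
by less, `e_{a0}`, `e_{ab}` and `e_{0b}` then act as multiples of `(t_a/t_0) ∂_{aa}`, `∂_{ab}` and
`∂_b`. Putting the `e_{a0}` first, an ordered monomial has a normally ordered monomial
differential operator as its leading term, and distinct ones have distinct leading terms.
-/

section Operators

variable {m n : ℕ}

@[simp]
lemma mkOp_fmono {M : Type} [AddCommGroup M] [Module ℂ M] (g : FMon m n → M) (x : FMon m n) :
    mkOp g (fmono x) = g x := by
  simp [mkOp, fmono]

lemma FSp_hom_ext {M : Type} [AddCommGroup M] [Module ℂ M] {f g : FSp m n →ₗ[ℂ] M}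
    (h : ∀ x, f (fmono x) = g (fmono x)) : f = g :=
  Finsupp.lhom_ext' fun x => LinearMap.ext_ring (h x)

lemma neg_one_pow_mul_neg_one_pow_self (k : ℕ) : (-1 : ℂ) ^ k * (-1 : ℂ) ^ k = 1 := by
  rw [← mul_pow, neg_mul_neg, one_mul, one_pow]

lemma neg_one_pow_card_filter_update (p : Fin n → Prop) [DecidablePred p] (b : Fin n → Bool)
    (i : Fin n) {v : Bool} (h : b i = !v) :
    (-1 : ℂ) ^ (Finset.univ.filter fun j => p j ∧ Function.update b i v j = true).card =
      (if p i then -1 else 1) * (-1) ^ (Finset.univ.filter fun j => p j ∧ b j = true).card := by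
  have sign (b' : Fin n → Bool) :
      (-1 : ℂ) ^ (Finset.univ.filter fun j => p j ∧ b' j = true).card =
        ∏ j, if p j ∧ b' j = true then -1 else 1 := by
    rw [Finset.prod_ite, Finset.prod_const, Finset.prod_const_one, mul_one]
  rw [sign, sign, ← Finset.mul_prod_erase _ _ (Finset.mem_univ i),
    ← Finset.mul_prod_erase _ _ (Finset.mem_univ i), ← mul_assoc]
  congr 1
  · cases v <;> by_cases hi : p i <;> simp [h, hi]
  · refine Finset.prod_congr rfl fun j hj => ?_
    rw [Function.update_of_ne (Finset.ne_of_mem_erase hj)]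

lemma neg_one_pow_cntB_update (b : Fin n → Bool) (i j : Fin n) {v : Bool} (h : b j = !v) :
    (-1 : ℂ) ^ cntB (Function.update b j v) i = (if j < i then -1 else 1) * (-1) ^ cntB b i :=
  neg_one_pow_card_filter_update (· < i) b j h

lemma neg_one_pow_cntA_update (b : Fin n → Bool) (j : Fin n) {v : Bool} (h : b j = !v) :
    (-1 : ℂ) ^ cntA (Function.update b j v) = -(-1) ^ cntA b := by
  simpa [cntA] using neg_one_pow_card_filter_update (fun _ => True) b j h

lemma opDivE_fmono (i : Fin m) (x : FMon m n) :
    opDivE i (fmono x) = fmono (x.1 - 1, Function.update x.2.1 i (x.2.1 i + 1), x.2.2) :=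
  mkOp_fmono _ x

lemma opParE_fmono (i : Fin m) (x : FMon m n) :
    opParE i (fmono x) =
      (x.2.1 i : ℂ) • fmono (x.1 + 1, Function.update x.2.1 i (x.2.1 i - 1), x.2.2) :=
  mkOp_fmono _ x

lemma opDivO_fmono (i : Fin n) (x : FMon m n) :
    opDivO i (fmono x) = if x.2.2 i then 0 else
      (-1 : ℂ) ^ cntB x.2.2 i • fmono (x.1 - 1, x.2.1, Function.update x.2.2 i true) :=
  mkOp_fmono _ x

lemma opParO_fmono (i : Fin n) (x : FMon m n) :
    opParO i (fmono x) = if x.2.2 i then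
      (-1 : ℂ) ^ cntB x.2.2 i • fmono (x.1 + 1, x.2.1, Function.update x.2.2 i false) else 0 :=
  mkOp_fmono _ x

lemma opPar0_fmono (x : FMon m n) : opPar0 (fmono x) = (x.1 : ℂ) • fmono x :=
  mkOp_fmono _ x

lemma opDivE_mul_opDivE (i j : Fin m) :
    (opDivE i * opDivE j : Module.End ℂ (FSp m n)) = opDivE j * opDivE i := by
  refine FSp_hom_ext fun x => ?_
  obtain rfl | h := eq_or_ne i j
  · rfl
  · simp [opDivE_fmono, h, h.symm, Function.update_comm h]

lemma opParE_mul_opParE (i j : Fin m) :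
    (opParE i * opParE j : Module.End ℂ (FSp m n)) = opParE j * opParE i := by
  refine FSp_hom_ext fun x => ?_
  obtain rfl | h := eq_or_ne i j
  · rfl
  · simp [opParE_fmono, h, h.symm, Function.update_comm h, smul_smul, mul_comm]

lemma opParE_mul_opDivE (i j : Fin m) :
    (opParE i * opDivE j : Module.End ℂ (FSp m n)) =
      opDivE j * opParE i + if i = j then 1 else 0 := by
  refine FSp_hom_ext fun x => ?_
  obtain rfl | h := eq_or_ne i j
  · rcases hk : x.2.1 i with _ | k
    · have hx : Function.update x.2.1 i 0 = x.2.1 := by simp [← hk]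
      simp [opParE_fmono, opDivE_fmono, hk, hx]
    · have hx : Function.update x.2.1 i (k + 1) = x.2.1 := by simp [← hk]
      simp [opParE_fmono, opDivE_fmono, hk, hx, add_smul]
  · simp [opParE_fmono, opDivE_fmono, h, h.symm, Function.update_comm h]

lemma opDivE_mul_opDivO (i : Fin m) (j : Fin n) :
    opDivE i * opDivO j = opDivO j * opDivE i := by
  refine FSp_hom_ext fun x => ?_
  cases hj : x.2.2 j <;> simp [opDivE_fmono, opDivO_fmono, hj]

lemma opParE_mul_opParO (i : Fin m) (j : Fin n) :
    opParE i * opParO j = opParO j * opParE i := by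
  refine FSp_hom_ext fun x => ?_
  cases hj : x.2.2 j <;> simp [opParE_fmono, opParO_fmono, hj, smul_smul, mul_comm]

lemma opParE_mul_opDivO (i : Fin m) (j : Fin n) :
    opParE i * opDivO j = opDivO j * opParE i := by
  refine FSp_hom_ext fun x => ?_
  cases hj : x.2.2 j <;> simp [opParE_fmono, opDivO_fmono, hj, smul_smul, mul_comm]

lemma opParO_mul_opDivE (i : Fin n) (j : Fin m) :
    opParO i * opDivE j = opDivE j * opParO i := by
  refine FSp_hom_ext fun x => ?_
  cases hi : x.2.2 i <;> simp [opParO_fmono, opDivE_fmono, hi]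

lemma opDivO_mul_opDivO (i j : Fin n) :
    (opDivO i * opDivO j : Module.End ℂ (FSp m n)) = (-1 : ℂ) • (opDivO j * opDivO i) := by
  refine FSp_hom_ext fun x => ?_
  obtain h | rfl | h := lt_trichotomy i j
  on_goal 2 => cases hi : x.2.2 i <;> simp [opDivO_fmono, hi]
  all_goals
    cases hi : x.2.2 i <;> cases hj : x.2.2 j <;>
      simp [opDivO_fmono, hi, hj, h.ne, h.ne', neg_one_pow_cntB_update, h, h.not_gt,
        Function.update_comm h.ne, smul_smul, mul_comm]

lemma opParO_mul_opParO (i j : Fin n) :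
    (opParO i * opParO j : Module.End ℂ (FSp m n)) = (-1 : ℂ) • (opParO j * opParO i) := by
  refine FSp_hom_ext fun x => ?_
  obtain h | rfl | h := lt_trichotomy i j
  on_goal 2 => cases hi : x.2.2 i <;> simp [opParO_fmono, hi]
  all_goals
    cases hi : x.2.2 i <;> cases hj : x.2.2 j <;>
      simp [opParO_fmono, hi, hj, h.ne, h.ne', neg_one_pow_cntB_update, h, h.not_gt,
        Function.update_comm h.ne, smul_smul, mul_comm]

lemma opParO_mul_opDivO (i j : Fin n) :
    (opParO i * opDivO j : Module.End ℂ (FSp m n)) =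
      (-1 : ℂ) • (opDivO j * opParO i) + if i = j then 1 else 0 := by
  refine FSp_hom_ext fun x => ?_
  obtain h | rfl | h := lt_trichotomy i j
  on_goal 2 =>
    have hx : Function.update x.2.2 i (x.2.2 i) = x.2.2 := Function.update_eq_self i x.2.2
    cases hi : x.2.2 i <;> rw [hi] at hx <;>
      simp [opParO_fmono, opDivO_fmono, hi, hx, neg_one_pow_cntB_update, smul_smul,
        neg_one_pow_mul_neg_one_pow_self]
  all_goals
    cases hi : x.2.2 i <;> cases hj : x.2.2 j <;>
      simp [opParO_fmono, opDivO_fmono, hi, hj, h.ne, h.ne', neg_one_pow_cntB_update, h, h.not_gt,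
        Function.update_comm h.ne, smul_smul, mul_comm]

/-- Elements `x i` (multiplications) and `d i` (derivations), `i : σ`, of parity `p i` satisfying
the defining relations of a Weyl superalgebra. -/
structure IsSuperWeyl {σ A : Type*} [DecidableEq σ] [Ring A] [Algebra ℂ A] (p : σ → ℕ)
    (x d : σ → A) : Prop where
  mul_mul (i j : σ) : x i * x j = (-1 : ℂ) ^ (p i * p j) • (x j * x i)
  del_del (i j : σ) : d i * d j = (-1 : ℂ) ^ (p i * p j) • (d j * d i)
  del_mul (i j : σ) : d i * x j = (-1 : ℂ) ^ (p i * p j) • (x j * d i) + if i = j then 1 else 0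

lemma isSuperWeyl_opDiv_opPar :
    IsSuperWeyl pI (opDiv : Ind m n → Module.End ℂ (FSp m n)) fun i => opPar (emb i) where
  mul_mul
    | .inl i, .inl j => by simpa [pI, opDiv] using opDivE_mul_opDivE i j
    | .inl i, .inr j => by simpa [pI, opDiv] using opDivE_mul_opDivO i j
    | .inr i, .inl j => by simpa [pI, opDiv] using (opDivE_mul_opDivO j i).symm
    | .inr i, .inr j => by simpa [pI, opDiv] using opDivO_mul_opDivO i j
  del_del
    | .inl i, .inl j => by simpa [pI, opPar, emb] using opParE_mul_opParE i j
    | .inl i, .inr j => by simpa [pI, opPar, emb] using opParE_mul_opParO i j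
    | .inr i, .inl j => by simpa [pI, opPar, emb] using (opParE_mul_opParO j i).symm
    | .inr i, .inr j => by simpa [pI, opPar, emb] using opParO_mul_opParO i j
  del_mul
    | .inl i, .inl j => by simpa [pI, opPar, opDiv, emb] using opParE_mul_opDivE i j
    | .inl i, .inr j => by simpa [pI, opPar, opDiv, emb] using opParE_mul_opDivO i j
    | .inr i, .inl j => by simpa [pI, opPar, opDiv, emb] using opParO_mul_opDivE i j
    | .inr i, .inr j => by simpa [pI, opPar, opDiv, emb] using opParO_mul_opDivO i j

/-- The parity automorphism of `F`, acting by `-1` on odd monomials; it supplies the Koszul signs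
when an odd operator acts on the second factor of a tensor product. -/
def parityOp : Module.End ℂ (FSp m n) := mkOp fun x => (-1 : ℂ) ^ cntA x.2.2 • fmono x

lemma parityOp_fmono (x : FMon m n) : parityOp (fmono x) = (-1 : ℂ) ^ cntA x.2.2 • fmono x :=
  mkOp_fmono _ x

lemma parityOp_mul_self : (parityOp * parityOp : Module.End ℂ (FSp m n)) = 1 :=
  FSp_hom_ext fun x => by simp [parityOp_fmono, smul_smul, neg_one_pow_mul_neg_one_pow_self]

lemma parityOp_mul_opDiv (i : Ind m n) :
    parityOp * opDiv i = (-1 : ℂ) ^ pI i • (opDiv i * parityOp) := by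
  refine FSp_hom_ext fun x => ?_
  rcases i with i | i
  · simp [opDiv, opDivE_fmono, parityOp_fmono, pI]
  · cases hi : x.2.2 i <;>
      simp [opDiv, opDivO_fmono, parityOp_fmono, pI, hi, neg_one_pow_cntA_update, smul_smul,
        mul_comm]

lemma parityOp_mul_opPar (i : Ind (m + 1) n) :
    parityOp * opPar i = (-1 : ℂ) ^ pI i • (opPar i * parityOp) := by
  refine FSp_hom_ext fun x => ?_
  rcases i with i | i
  · cases i using Fin.cases <;>
      simp [opPar, opPar0_fmono, opParE_fmono, parityOp_fmono, pI, smul_smul, mul_comm]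
  · cases hi : x.2.2 i <;>
      simp [opPar, opParO_fmono, parityOp_fmono, pI, hi, neg_one_pow_cntA_update, smul_smul,
        mul_comm]

lemma parityOp_pow_mul_comm {T : Module.End ℂ (FSp m n)} {q : ℕ}
    (h : parityOp * T = (-1 : ℂ) ^ q • (T * parityOp)) (k : ℕ) :
    parityOp ^ k * T = (-1 : ℂ) ^ (k * q) • (T * parityOp ^ k) := by
  induction k with
  | zero => simp
  | succ k ih =>
    rw [pow_succ, mul_assoc, h, mul_smul_comm, ← mul_assoc, ih, smul_mul_assoc, smul_smul,
      mul_assoc, ← pow_add, Nat.succ_mul, add_comm q]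

end Operators

section TensorOp

variable {X Y : Type*}

/-- The operator `A ⊗ B` on `(X →₀ ℂ) ⊗ (Y →₀ ℂ)`, transported to the space `X × Y →₀ ℂ` so that
its matrix coefficients in the basis `X × Y` are available. -/
def tensorOp : Module.End ℂ (X →₀ ℂ) →ₗ[ℂ] Module.End ℂ (Y →₀ ℂ) →ₗ[ℂ]
    Module.End ℂ (X × Y →₀ ℂ) :=
  (TensorProduct.mapBilinear (RingHom.id ℂ) _ _ _ _).compr₂
    (finsuppTensorFinsupp' ℂ X Y).conj.toLinearMap

lemma tensorOp_eq_conj (A : Module.End ℂ (X →₀ ℂ)) (B : Module.End ℂ (Y →₀ ℂ)) :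
    tensorOp A B = (finsuppTensorFinsupp' ℂ X Y).conj (TensorProduct.map A B) :=
  rfl

lemma tensorOp_mul (A A' : Module.End ℂ (X →₀ ℂ)) (B B' : Module.End ℂ (Y →₀ ℂ)) :
    tensorOp A B * tensorOp A' B' = tensorOp (A * A') (B * B') := by
  rw [tensorOp_eq_conj, tensorOp_eq_conj, tensorOp_eq_conj, TensorProduct.map_mul]
  exact (LinearEquiv.conj_comp _ _ _).symm

lemma tensorOp_one_one : tensorOp (1 : Module.End ℂ (X →₀ ℂ)) (1 : Module.End ℂ (Y →₀ ℂ)) = 1 := by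
  rw [tensorOp_eq_conj, TensorProduct.map_one]
  exact LinearEquiv.conj_id _

lemma tensorOp_single (A : Module.End ℂ (X →₀ ℂ)) (B : Module.End ℂ (Y →₀ ℂ)) (z : X × Y) :
    tensorOp A B (Finsupp.single z 1) =
      finsuppTensorFinsupp' ℂ X Y (A (Finsupp.single z.1 1) ⊗ₜ B (Finsupp.single z.2 1)) := by
  rw [tensorOp_eq_conj, LinearEquiv.conj_apply_apply,
    finsuppTensorFinsupp'_symm_single_eq_single_one_tmul, TensorProduct.map_tmul]

variable (X Y) in
/-- The action `A ↦ A ⊗ 1` on the first factor of `(X →₀ ℂ) ⊗ (Y →₀ ℂ)`. -/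
def tensorOpLeft : Module.End ℂ (X →₀ ℂ) →ₐ[ℂ] Module.End ℂ (X × Y →₀ ℂ) :=
  AlgHom.ofLinearMap (tensorOp.flip 1) tensorOp_one_one fun A B => by
    simp only [LinearMap.flip_apply, tensorOp_mul, mul_one]

end TensorOp

section GlFamily

variable {ι A : Type*} [DecidableEq ι] [Ring A] [Algebra ℂ A] {p : ι → ℕ}

/-- A family satisfying the supercommutation relations of the matrix units of `gl`, with index
parities `p`. -/
def IsGlFamily (p : ι → ℕ) (e : ι → ι → A) : Prop :=
  ∀ i j k l, e i j * e k l - (-1 : ℂ) ^ ((p i + p j) * (p k + p l)) • (e k l * e i j) =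
    (if j = k then e i l else 0) -
      (-1 : ℂ) ^ ((p i + p j) * (p k + p l)) • (if l = i then e k j else 0)

lemma isGlFamily_gen {ι : Type} [DecidableEq ι] (p : ι → ℕ) : IsGlFamily p (gen p) := by
  intro i j k l
  simpa only [map_sub, map_mul, map_smul, apply_ite (RingQuot.mkAlgHom ℂ (glRel ι p)),
    map_zero, gen] using RingQuot.mkAlgHom_rel ℂ (glRel.basic (p := p) i j k l)

lemma IsGlFamily.exists_algHom {ι : Type} [DecidableEq ι] {p : ι → ℕ} {A : Type*} [Ring A]
    [Algebra ℂ A] {e : ι → ι → A} (he : IsGlFamily p e) :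
    ∃ β : UEA ι p →ₐ[ℂ] A, ∀ i j, β (gen p i j) = e i j := by
  refine ⟨RingQuot.liftAlgHom ℂ ⟨FreeAlgebra.lift ℂ fun q : ι × ι => e q.1 q.2, ?_⟩, ?_⟩
  · rintro _ _ ⟨i, j, k, l⟩
    simpa only [map_sub, map_mul, map_smul, apply_ite (FreeAlgebra.lift ℂ _), map_zero,
      FreeAlgebra.lift_ι_apply] using he i j k l
  · simp [gen]

lemma adjoin_range_gen {ι : Type} [DecidableEq ι] (p : ι → ℕ) :
    Algebra.adjoin ℂ (Set.range fun q : ι × ι => gen p q.1 q.2) = ⊤ := by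
  have hrange : (Set.range fun q : ι × ι => gen p q.1 q.2) =
      RingQuot.mkAlgHom ℂ (glRel ι p) '' Set.range (FreeAlgebra.ι ℂ) := (Set.range_comp _ _)
  rw [hrange, ← AlgHom.map_adjoin, FreeAlgebra.adjoin_range_ι, Algebra.map_top,
    AlgHom.range_eq_top]
  exact RingQuot.mkAlgHom_surjective ℂ _

lemma IsGlFamily.tensorOp_parity {X Y : Type*} {e : ι → ι → Module.End ℂ (Y →₀ ℂ)}
    (he : IsGlFamily p e) {S : Module.End ℂ (X →₀ ℂ)} (hS : S * S = 1) :
    IsGlFamily p fun i j => tensorOp (S ^ (p i + p j)) (e i j) := by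
  intro i j k l
  have h := congrArg (tensorOp (S ^ (p i + p j + (p k + p l)))) (he i j k l)
  have hSS (a : ℕ) : S ^ (a + a) = 1 := by rw [← mul_two, mul_comm, pow_mul, pow_two, hS, one_pow]
  have hjk : tensorOp (S ^ (p i + p j + (p k + p l))) (if j = k then e i l else 0) =
      if j = k then tensorOp (S ^ (p i + p l)) (e i l) else 0 := by
    split_ifs with hjk
    · rw [hjk, show p i + p k + (p k + p l) = p k + p k + (p i + p l) by ring, pow_add, hSS,
        one_mul]
    · exact map_zero _
  have hli : tensorOp (S ^ (p i + p j + (p k + p l))) (if l = i then e k j else 0) =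
      if l = i then tensorOp (S ^ (p k + p j)) (e k j) else 0 := by
    split_ifs with hli
    · rw [hli, show p i + p j + (p k + p i) = p i + p i + (p k + p j) by ring, pow_add, hSS,
        one_mul]
    · exact map_zero _
  rw [map_sub, map_sub, map_smul, map_smul, hjk, hli] at h
  rw [tensorOp_mul, tensorOp_mul, ← pow_add, ← pow_add, add_comm (p k + p l), h]

end GlFamily

namespace IsSuperWeyl

section Shift

variable {σ A : Type*} [DecidableEq σ] [Ring A] [Algebra ℂ A] {p : σ → ℕ} {x d : σ → A}

lemma comp {τ : Type*} [DecidableEq τ] (h : IsSuperWeyl p x d) {f : τ → σ}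
    (hf : Function.Injective f) {q : τ → ℕ} (hq : ∀ i, Even (p (f i)) ↔ Even (q i)) :
    IsSuperWeyl q (fun i => x (f i)) fun i => d (f i) := by
  have hsign (i j : τ) : (-1 : ℂ) ^ (p (f i) * p (f j)) = (-1) ^ (q i * q j) :=
    neg_one_pow_congr (by simp only [Nat.even_mul, hq])
  constructor <;> intro i j
  · rw [h.mul_mul, hsign]
  · rw [h.del_del, hsign]
  · simp only [h.del_mul, hsign, hf.eq_iff]

lemma add_smul_one (h : IsSuperWeyl p x d) {c : σ → ℂ} (hc : ∀ i, c i ≠ 0 → Even (p i)) :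
    IsSuperWeyl p (fun i => x i + c i • 1) d := by
  have hl (i j : σ) : (-1 : ℂ) ^ (p i * p j) * c i = c i := by
    obtain hi | hi := eq_or_ne (c i) 0
    · rw [hi, mul_zero]
    · rw [((hc i hi).mul_right _).neg_one_pow, one_mul]
  have hr (i j : σ) : (-1 : ℂ) ^ (p i * p j) * c j = c j := by rw [mul_comm (p i), hl]
  refine ⟨fun i j => ?_, h.del_del, fun i j => ?_⟩
  · simp only [add_mul, mul_add, smul_mul_assoc, mul_smul_comm, one_mul, mul_one, smul_add,
      smul_smul, ← mul_assoc, hl, hr, h.mul_mul i j]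
    abel_nf
    rw [mul_comm (c i)]
  · simp only [add_mul, mul_add, smul_mul_assoc, mul_smul_comm, one_mul, mul_one, smul_add,
      smul_smul, hr, h.del_mul i j]
    abel

end Shift

section Pairs

variable {ι A : Type*} [DecidableEq ι] [Ring A] [Algebra ℂ A] {p : ι → ℕ} {x d : ι × ι → A}

lemma bilinear_commutator (h : IsSuperWeyl (fun q : ι × ι => p q.1 + p q.2) x d)
    (i j u v k l : ι) :
    x (k, i) * d (k, j) * (x (l, u) * d (l, v)) -
        (-1 : ℂ) ^ ((p i + p j) * (p u + p v)) •
          (x (l, u) * d (l, v) * (x (k, i) * d (k, j))) =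
      (if k = l ∧ j = u then x (k, i) * d (l, v) else 0) -
        (-1 : ℂ) ^ ((p i + p j) * (p u + p v)) •
          (if l = k ∧ v = i then x (l, u) * d (k, j) else 0) := by
  have hkl : x (k, i) * d (k, j) * (x (l, u) * d (l, v)) =
      (-1 : ℂ) ^ ((p k + p j) * (p l + p u)) • (x (k, i) * x (l, u) * (d (k, j) * d (l, v))) +
        if k = l ∧ j = u then x (k, i) * d (l, v) else 0 := by
    rw [mul_assoc, ← mul_assoc (d (k, j)), h.del_mul]
    simp only [Prod.mk.injEq]
    split_ifs <;> simp [mul_add, add_mul, mul_assoc]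
  have hlk : x (l, u) * d (l, v) * (x (k, i) * d (k, j)) =
      (-1 : ℂ) ^ ((p l + p v) * (p k + p i) + (p l + p u) * (p k + p i) +
          (p l + p v) * (p k + p j)) • (x (k, i) * x (l, u) * (d (k, j) * d (l, v))) +
        if l = k ∧ v = i then x (l, u) * d (k, j) else 0 := by
    have hswap : x (l, u) * x (k, i) * (d (l, v) * d (k, j)) =
        (-1 : ℂ) ^ ((p l + p u) * (p k + p i) + (p l + p v) * (p k + p j)) •
          (x (k, i) * x (l, u) * (d (k, j) * d (l, v))) := by
      rw [h.mul_mul (l, u), h.del_del (l, v), smul_mul_assoc, mul_smul_comm, smul_smul, pow_add]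
    rw [add_assoc, pow_add, ← smul_smul, ← hswap, mul_assoc, ← mul_assoc (d (l, v)), h.del_mul]
    simp only [Prod.mk.injEq]
    split_ifs <;> simp [mul_add, add_mul, mul_assoc]
  have hsign : (-1 : ℂ) ^ ((p i + p j) * (p u + p v) + ((p l + p v) * (p k + p i) +
      (p l + p u) * (p k + p i) + (p l + p v) * (p k + p j))) =
        (-1) ^ ((p k + p j) * (p l + p u)) :=
    neg_one_pow_congr (by simp only [Nat.even_add, Nat.even_mul]; grind)
  rw [hkl, hlk, smul_add, smul_smul, ← pow_add, hsign]
  abel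

lemma isGlFamily_sum [Fintype ι] (h : IsSuperWeyl (fun q : ι × ι => p q.1 + p q.2) x d) :
    IsGlFamily p fun i j => ∑ k, x (k, i) * d (k, j) := by
  intro i j u v
  have hswap : (∑ l, x (l, u) * d (l, v)) * ∑ k, x (k, i) * d (k, j) =
      ∑ k, ∑ l, x (l, u) * d (l, v) * (x (k, i) * d (k, j)) := by
    rw [Finset.sum_mul_sum, Finset.sum_comm]
  rw [Finset.sum_mul_sum, hswap, Finset.smul_sum, ← Finset.sum_sub_distrib]
  simp_rw [Finset.smul_sum, ← Finset.sum_sub_distrib, h.bilinear_commutator i j u v,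
    Finset.sum_sub_distrib, ← Finset.smul_sum]
  congr 1
  · by_cases hj : j = u <;> simp [hj]
  · by_cases hv : v = i <;> simp [hv]

end Pairs

end IsSuperWeyl

lemma exists_equiv_ind {σ : Type*} [Finite σ] (p : σ → ℕ) :
    ∃ (m n : ℕ) (θ : σ ≃ Ind m n), ∀ i, Even (pI (θ i)) ↔ Even (p i) := by
  classical
  refine ⟨Nat.card {i // Even (p i)}, Nat.card {i // ¬Even (p i)},
    (Equiv.sumCompl fun i => Even (p i)).symm.trans
      (Equiv.sumCongr (Finite.equivFin _) (Finite.equivFin _)), fun i => ?_⟩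
  by_cases h : Even (p i) <;> simp [pI, h]

namespace SuperTensor

variable {m n : ℕ} (ST : SuperTensor m n)

lemma induction_mul {P : ST.T → Prop} (mul : ∀ d u, P (ST.inD d * ST.inU u))
    (add : ∀ x y, P x → P y → P (x + y)) (t : ST.T) : P t := by
  obtain ⟨z, rfl⟩ := ST.equiv.surjective t
  induction z using TensorProduct.induction_on with
  | zero => simpa using mul 0 0
  | tmul d u => exact ST.equiv_tmul d u ▸ mul d u
  | add x y hx hy => exact map_add ST.equiv x y ▸ add _ _ hx hy

variable {A : Type*} [Ring A] [Algebra ℂ A] {α : Dprime m n →ₐ[ℂ] A}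
  {β : UEA (Ind m n) pI →ₐ[ℂ] A}

/-- The linear map `d ⊗ u ↦ α d * β u`. -/
def liftLinear (α : Dprime m n →ₐ[ℂ] A) (β : UEA (Ind m n) pI →ₐ[ℂ] A) : ST.T →ₗ[ℂ] A :=
  TensorProduct.lift ((LinearMap.mul ℂ A).compl₁₂ α.toLinearMap β.toLinearMap) ∘ₗ
    ST.equiv.symm.toLinearMap

lemma liftLinear_mul (d : Dprime m n) (u : UEA (Ind m n) pI) :
    ST.liftLinear α β (ST.inD d * ST.inU u) = α d * β u := by
  simp [liftLinear, ← ST.equiv_tmul]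

lemma liftLinear_inD (d : Dprime m n) : ST.liftLinear α β (ST.inD d) = α d := by
  simpa using ST.liftLinear_mul (α := α) (β := β) d 1

lemma liftLinear_inU (u : UEA (Ind m n) pI) : ST.liftLinear α β (ST.inU u) = β u := by
  simpa using ST.liftLinear_mul (α := α) (β := β) 1 u

lemma liftLinear_inD_mul (d : Dprime m n) (s : ST.T) :
    ST.liftLinear α β (ST.inD d * s) = α d * ST.liftLinear α β s := by
  induction s using ST.induction_mul with
  | mul d' u => rw [← mul_assoc, ← map_mul, liftLinear_mul, liftLinear_mul, map_mul, mul_assoc]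
  | add x y hx hy => rw [mul_add, map_add, map_add, mul_add, hx, hy]

variable (α β) in
/-- The relations a pair of algebra maps out of `D'(m|n)` and `U(gl(m|n))` must satisfy in order to
extend to their super tensor product: the Koszul sign rule on generators. -/
structure IsKoszulPair : Prop where
  comm_div : ∀ i j k, β (gen pI i j) * α (tdiv k) =
    (-1 : ℂ) ^ ((pI i + pI j) * pI k) • (α (tdiv k) * β (gen pI i j))
  comm_par : ∀ i j k, β (gen pI i j) * α (tpar k) =
    (-1 : ℂ) ^ ((pI i + pI j) * pI k) • (α (tpar k) * β (gen pI i j))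

lemma exists_gen_comm (h : IsKoszulPair α β) (i j : Ind m n) (d : Dprime m n) :
    ∃ d', ST.inU (gen pI i j) * ST.inD d = ST.inD d' * ST.inU (gen pI i j) ∧
      β (gen pI i j) * α d = α d' * β (gen pI i j) := by
  obtain ⟨d, hd⟩ := d
  induction hd using Algebra.adjoin_induction with
  | mem x hx =>
    obtain ⟨k, rfl⟩ | ⟨k, rfl⟩ := hx
    · refine ⟨(-1 : ℂ) ^ ((pI i + pI j) * pI k) • tdiv k, ?_, ?_⟩
      · rw [map_smul, smul_mul_assoc]; exact ST.comm_div i j k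
      · rw [map_smul, smul_mul_assoc]; exact h.comm_div i j k
    · refine ⟨(-1 : ℂ) ^ ((pI i + pI j) * pI k) • tpar k, ?_, ?_⟩
      · rw [map_smul, smul_mul_assoc]; exact ST.comm_par i j k
      · rw [map_smul, smul_mul_assoc]; exact h.comm_par i j k
  | algebraMap r =>
    exact ⟨algebraMap ℂ (Dprime m n) r,
      ((congrArg _ (AlgHom.commutes ST.inD r)).trans (Algebra.commutes r _).symm).trans
        (congrArg (· * _) (AlgHom.commutes ST.inD r).symm),
      ((congrArg _ (AlgHom.commutes α r)).trans (Algebra.commutes r _).symm).trans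
        (congrArg (· * _) (AlgHom.commutes α r).symm)⟩
  | add x y hx hy ihx ihy =>
    obtain ⟨x', hx₁, hx₂⟩ := ihx
    obtain ⟨y', hy₁, hy₂⟩ := ihy
    change ∃ d', _ * ST.inD (⟨x, hx⟩ + ⟨y, hy⟩) = _ ∧ _ * α (⟨x, hx⟩ + ⟨y, hy⟩) = _
    exact ⟨x' + y', by rw [map_add, map_add, mul_add, add_mul, hx₁, hy₁],
      by rw [map_add, map_add, mul_add, add_mul, hx₂, hy₂]⟩
  | mul x y hx hy ihx ihy =>
    obtain ⟨x', hx₁, hx₂⟩ := ihx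
    obtain ⟨y', hy₁, hy₂⟩ := ihy
    change ∃ d', _ * ST.inD (⟨x, hx⟩ * ⟨y, hy⟩) = _ ∧ _ * α (⟨x, hx⟩ * ⟨y, hy⟩) = _
    exact ⟨x' * y',
      by rw [map_mul, map_mul, ← mul_assoc, hx₁, mul_assoc, hy₁, mul_assoc],
      by rw [map_mul, map_mul, ← mul_assoc, hx₂, mul_assoc, hy₂, mul_assoc]⟩

lemma liftLinear_inU_mul (h : IsKoszulPair α β) (u : UEA (Ind m n) pI) (s : ST.T) :
    ST.liftLinear α β (ST.inU u * s) = β u * ST.liftLinear α β s := by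
  have hu : u ∈ Algebra.adjoin ℂ (Set.range fun q : Ind m n × Ind m n => gen pI q.1 q.2) :=
    adjoin_range_gen pI ▸ Algebra.mem_top
  induction hu using Algebra.adjoin_induction generalizing s with
  | mem _ hx =>
    obtain ⟨⟨i, j⟩, rfl⟩ := hx
    induction s using ST.induction_mul with
    | mul d u =>
      obtain ⟨d', hd, hd'⟩ := ST.exists_gen_comm h i j d
      rw [← mul_assoc, hd, mul_assoc, ← map_mul, liftLinear_mul, liftLinear_mul, map_mul,
        ← mul_assoc, ← mul_assoc, hd']
    | add x y hx hy => rw [mul_add, map_add, map_add, mul_add, hx, hy]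
  | algebraMap r => simp only [AlgHom.commutes, ← Algebra.smul_def, map_smul]
  | add x y _ _ hx hy => rw [map_add, map_add, add_mul, add_mul, map_add, hx, hy]
  | mul x y _ _ hx hy => rw [map_mul ST.inU, map_mul β, mul_assoc, hx, hy, mul_assoc]

lemma exists_lift (h : IsKoszulPair α β) :
    ∃ Θ : ST.T →ₐ[ℂ] A, (∀ d, Θ (ST.inD d) = α d) ∧ ∀ u, Θ (ST.inU u) = β u := by
  refine ⟨AlgHom.ofLinearMap (ST.liftLinear α β) ?_ fun x y => ?_, ST.liftLinear_inD,
    ST.liftLinear_inU⟩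
  · simpa using ST.liftLinear_inD (α := α) (β := β) 1
  · induction x using ST.induction_mul with
    | mul d u =>
      rw [mul_assoc, liftLinear_inD_mul, ST.liftLinear_inU_mul h, liftLinear_mul,
        mul_assoc]
    | add x x' hx hx' => rw [add_mul, map_add, map_add, add_mul, hx, hx']

end SuperTensor

section WordSpan

variable {R A Γ : Type*} [CommRing R] [Ring A] [Algebra R A]

variable (R) in
/-- The span of the products of fewer than `d` members of the family `g`. For the generators of an
enveloping algebra this is the standard filtration, shifted by one. -/
def wordSpan (g : Γ → A) (d : ℕ) : Submodule R A :=
  Submodule.span R ((fun l : List Γ => (l.map g).prod) '' {l | l.length < d})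

variable {g : Γ → A}

lemma prod_mem_wordSpan {d : ℕ} {l : List Γ} (hl : l.length < d) :
    (l.map g).prod ∈ wordSpan R g d :=
  Submodule.subset_span ⟨l, hl, rfl⟩

lemma mul_mem_wordSpan (i : Γ) {d : ℕ} {x : A} (hx : x ∈ wordSpan R g d) :
    g i * x ∈ wordSpan R g (d + 1) := by
  suffices wordSpan R g d ≤ (wordSpan R g (d + 1)).comap (LinearMap.mulLeft R (g i)) from this hx
  rw [wordSpan, Submodule.span_le]
  rintro _ ⟨l, hl, rfl⟩
  simpa using prod_mem_wordSpan (R := R) (g := g) (l := i :: l) (Nat.succ_lt_succ hl)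

lemma mul_prod_mem_wordSpan {x : A} (hx : x ∈ Submodule.span R (Set.range g)) (l : List Γ) :
    x * (l.map g).prod ∈ wordSpan R g (l.length + 2) := by
  suffices Submodule.span R (Set.range g) ≤
    (wordSpan R g (l.length + 2)).comap (LinearMap.mulRight R (l.map g).prod) from this hx
  rw [Submodule.span_le]
  rintro _ ⟨i, rfl⟩
  simpa using prod_mem_wordSpan (R := R) (g := g) (l := i :: l) (Nat.lt_succ_self _)

lemma exists_prod_sub_smul_prod_mem_wordSpan
    (hcomm : ∀ i j, ∃ c : R, g i * g j - c • (g j * g i) ∈ Submodule.span R (Set.range g))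
    {l l' : List Γ} (h : l.Perm l') :
    ∃ c : R, (l.map g).prod - c • (l'.map g).prod ∈ wordSpan R g l.length := by
  induction h with
  | nil => exact ⟨1, by simp⟩
  | cons a _ ih =>
    obtain ⟨c, hc⟩ := ih
    exact ⟨c, by simpa [mul_sub] using mul_mem_wordSpan a hc⟩
  | swap a b l =>
    obtain ⟨c, hc⟩ := hcomm b a
    exact ⟨c, by simpa [sub_mul, mul_assoc] using mul_prod_mem_wordSpan hc l⟩
  | trans h _ ih ih' =>
    obtain ⟨c, hc⟩ := ih
    obtain ⟨c', hc'⟩ := ih'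
    refine ⟨c * c', ?_⟩
    rw [← h.length_eq] at hc'
    simpa [smul_sub, smul_smul] using add_mem hc (Submodule.smul_mem _ c hc')

lemma exists_perm_cons_cons_of_two_le_count [DecidableEq Γ] {l : List Γ} {i : Γ}
    (h : 2 ≤ l.count i) : ∃ l', l.Perm (i :: i :: l') := by
  have hi : i ∈ l := List.count_pos_iff.mp (by lia)
  have hi' : i ∈ l.erase i := List.count_pos_iff.mp (by rw [List.count_erase_self]; lia)
  exact ⟨_, (List.perm_cons_erase hi).trans ((List.perm_cons_erase hi').cons i)⟩

-- The spanning half of the Poincaré–Birkhoff–Witt theorem: modulo shorter words, the generators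
-- commute up to scalars and the square of an odd generator vanishes.
theorem eq_top_of_forall_exists_prod_mem [DecidableEq Γ] {odd : Γ → Prop}
    (hcomm : ∀ i j, ∃ c : R, g i * g j - c • (g j * g i) ∈ Submodule.span R (Set.range g))
    (hodd : ∀ i, odd i → g i * g i ∈ Submodule.span R (Set.range g))
    (hg : Algebra.adjoin R (Set.range g) = ⊤) {K : Submodule R A}
    (hK : ∀ s : Multiset Γ, (∀ i, odd i → s.count i ≤ 1) →
      ∃ l : List Γ, (l : Multiset Γ) = s ∧ (l.map g).prod ∈ K) : K = ⊤ := by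
  have hword (d : ℕ) : wordSpan R g d ≤ K := by
    induction d with
    | zero => simp [wordSpan]
    | succ d ih =>
      rw [wordSpan, Submodule.span_le]
      rintro _ ⟨l, hl, rfl⟩
      have hlK : wordSpan R g l.length ≤ K :=
        (Submodule.span_mono (Set.image_mono fun _ h =>
          h.trans_le (Nat.lt_succ_iff.mp hl))).trans ih
      have mem_of_perm {l'} (h : l.Perm l') (hl' : (l'.map g).prod ∈ K) : (l.map g).prod ∈ K := by
        obtain ⟨c, hc⟩ := exists_prod_sub_smul_prod_mem_wordSpan hcomm h
        simpa using add_mem (hlK hc) (K.smul_mem c hl')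
      by_cases hs : ∀ i, odd i → (l : Multiset Γ).count i ≤ 1
      · obtain ⟨l', hl', hmem⟩ := hK l hs
        exact mem_of_perm (Multiset.coe_eq_coe.mp hl').symm hmem
      · push Not at hs
        obtain ⟨i, hi, hcount⟩ := hs
        obtain ⟨l', hl'⟩ := exists_perm_cons_cons_of_two_le_count (Multiset.coe_count i l ▸ hcount)
        refine mem_of_perm hl' (hlK ?_)
        rw [hl'.length_eq]
        simpa [mul_assoc] using mul_prod_mem_wordSpan (hodd i hi) l'
  rw [← top_le_iff, ← Algebra.top_toSubmodule, ← hg, Algebra.adjoin_eq_span, Submodule.span_le]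
  intro x hx
  obtain ⟨l, hl, rfl⟩ := Submonoid.exists_list_of_mem_closure hx
  obtain ⟨l, rfl⟩ : l ∈ Set.range (List.map g) := by rwa [Set.range_list_map]
  exact hword _ (prod_mem_wordSpan (Nat.lt_succ_self _))

end WordSpan

section Supercommutator

variable {ι A : Type*} [Ring A] [Algebra ℂ A] {p : ι → ℕ} {e : ι → ι → A}

variable (p e) in
/-- The part of parity `q` of the span of a family of matrix units. -/
def homogeneousPart (q : ℕ) : Submodule ℂ A :=
  Submodule.span ℂ {x | ∃ i j, (Even (p i + p j) ↔ Even q) ∧ e i j = x}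

lemma mem_homogeneousPart {q : ℕ} {i j : ι} (h : Even (p i + p j) ↔ Even q) :
    e i j ∈ homogeneousPart p e q :=
  Submodule.subset_span ⟨i, j, h, rfl⟩

lemma IsGlFamily.supercommutator_mem [DecidableEq ι] (he : IsGlFamily p e) {q r : ℕ} {x y : A}
    (hx : x ∈ homogeneousPart p e q) (hy : y ∈ homogeneousPart p e r) :
    x * y - (-1 : ℂ) ^ (q * r) • (y * x) ∈
      Submodule.span ℂ (Set.range fun k : ι × ι => e k.1 k.2) := by
  have mem_span (i j : ι) : e i j ∈ Submodule.span ℂ (Set.range fun k : ι × ι => e k.1 k.2) :=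
    Submodule.subset_span ⟨(i, j), rfl⟩
  have hxy := Submodule.apply_mem_map₂
    (LinearMap.mul ℂ A - (-1 : ℂ) ^ (q * r) • (LinearMap.mul ℂ A).flip) hx hy
  rw [homogeneousPart, homogeneousPart, Submodule.map₂_span_span] at hxy
  refine Submodule.span_le.mpr ?_ hxy
  rintro _ ⟨_, ⟨i, j, hij, rfl⟩, _, ⟨k, l, hkl, rfl⟩, rfl⟩
  have hsign : (-1 : ℂ) ^ (q * r) = (-1) ^ ((p i + p j) * (p k + p l)) :=
    neg_one_pow_congr (by simp only [Nat.even_mul, hij, hkl])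
  simp only [LinearMap.sub_apply, LinearMap.smul_apply, LinearMap.flip_apply, LinearMap.mul_apply',
    hsign, he i j k l]
  refine sub_mem ?_ (Submodule.smul_mem _ _ ?_)
  · split_ifs
    exacts [mem_span i l, zero_mem _]
  · split_ifs
    exacts [mem_span k j, zero_mem _]

end Supercommutator

section HatIndex

variable {m n : ℕ}

lemma pI_emb (a : Ind m n) : pI (emb a) = pI a := by cases a <;> rfl

lemma pI_z0 : pI (z0 : Ind (m + 1) n) = 0 := rfl

lemma eq_z0_or_exists_eq_emb (i : Ind (m + 1) n) : i = z0 ∨ ∃ a, i = emb a := by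
  obtain i | i := i
  · obtain rfl | ⟨j, rfl⟩ := Fin.eq_zero_or_eq_succ i
    exacts [.inl rfl, .inr ⟨Sum.inl j, rfl⟩]
  · exact .inr ⟨Sum.inr i, rfl⟩

lemma sum_eq_z0_add_sum_emb {M : Type*} [AddCommMonoid M] (f : Ind (m + 1) n → M) :
    ∑ i, f i = f z0 + ∑ a, f (emb a) := by
  rw [Fintype.sum_sum_type, Fin.sum_univ_succ, Fintype.sum_sum_type, add_assoc]
  rfl

lemma sum_neg_one_pow_pI : ∑ a : Ind m n, (-1 : ℂ) ^ pI a = m - n := by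
  simp [Fintype.sum_sum_type, pI, sub_eq_add_neg]

lemma cast_sub_cast_add_one_ne_zero (hmn : m + 1 ≠ n) : (m : ℂ) - n + 1 ≠ 0 := by
  rw [sub_add_eq_add_sub, sub_ne_zero]
  exact_mod_cast hmn

end HatIndex

section PBW

variable {m n : ℕ}

variable (m n) in
/-- Labels of a basis of `sl(m+1|n)`: `col a` for `e_{a0}`, `row b` for `e_{0b}`, `mid a b` with
`a ≠ b` for `e_{ab}`, and `mid a a` for the Cartan element `e_{00} - (-1)^{|a|} e_{aa}`. -/
inductive SlGen
  | col (a : Ind m n)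
  | mid (a b : Ind m n)
  | row (b : Ind m n)

instance : DecidableEq (SlGen m n) := Classical.decEq _

/-- The parity of a basis element of `sl(m+1|n)`. -/
def SlGen.parity : SlGen m n → ℕ
  | col a => pI a
  | mid a b => pI a + pI b
  | row b => pI b

/-- Whether a basis element of `sl(m+1|n)` is one of the `e_{a0}`, which come first in the ordered
monomials. -/
def SlGen.isCol : SlGen m n → Bool
  | col _ => true
  | mid _ _ => false
  | row _ => false

/-- The basis of `sl(m+1|n)` labelled by `SlGen`, inside `U(gl(m+1|n))`. -/
def slGen : SlGen m n → UEA (Ind (m + 1) n) pI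
  | .col a => gen pI (emb a) z0
  | .mid a b => if a = b then gen pI z0 z0 - (-1 : ℂ) ^ pI a • gen pI (emb a) (emb a)
      else gen pI (emb a) (emb b)
  | .row b => gen pI z0 (emb b)

/-- The basis of `sl(m+1|n)` completed by `G₁ = glGen none`; this is a basis of `gl(m+1|n)` when
`m + 1 ≠ n`. -/
def glGen (γ : Option (SlGen m n)) : UEA (Ind (m + 1) n) pI :=
  γ.elim (G1 (Ind (m + 1) n) pI) slGen

lemma slGen_mem_homogeneousPart (γ : SlGen m n) :
    slGen γ ∈ homogeneousPart pI (gen pI) γ.parity := by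
  cases γ with
  | col a => exact mem_homogeneousPart (by simp [SlGen.parity, pI_emb, pI_z0])
  | row b => exact mem_homogeneousPart (by simp [SlGen.parity, pI_emb, pI_z0])
  | mid a b =>
    rw [slGen]
    split_ifs with h
    · subst h
      exact sub_mem (mem_homogeneousPart (by simp [SlGen.parity, pI_z0]))
        (Submodule.smul_mem _ _ (mem_homogeneousPart (by simp [SlGen.parity, pI_emb])))
    · exact mem_homogeneousPart (by simp [SlGen.parity, pI_emb])

lemma glGen_mem_homogeneousPart (γ : Option (SlGen m n)) :
    glGen γ ∈ homogeneousPart pI (gen pI) (γ.elim 0 SlGen.parity) := by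
  cases γ with
  | none =>
    rw [glGen, Option.elim_none, G1]
    exact sum_mem fun i _ => mem_homogeneousPart (by simp)
  | some γ => exact slGen_mem_homogeneousPart γ

lemma gen_z0_z0_mem_span_glGen (hmn : m + 1 ≠ n) :
    gen pI z0 z0 ∈ Submodule.span ℂ (Set.range (glGen (m := m) (n := n))) := by
  have hsum : (m - n + 1 : ℂ) • gen pI z0 z0 =
      glGen none + ∑ a : Ind m n, (-1 : ℂ) ^ pI a • glGen (some (.mid a a)) := by
    simp only [glGen, Option.elim, G1, slGen, if_true, sum_eq_z0_add_sum_emb, smul_sub, smul_smul,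
      neg_one_pow_mul_neg_one_pow_self, one_smul, Finset.sum_sub_distrib, ← Finset.sum_smul,
      sum_neg_one_pow_pI, add_smul]
    abel
  rw [← Submodule.smul_mem_iff _ (cast_sub_cast_add_one_ne_zero hmn), hsum]
  exact add_mem (Submodule.subset_span ⟨_, rfl⟩)
    (sum_mem fun a _ => Submodule.smul_mem _ _ (Submodule.subset_span ⟨_, rfl⟩))

lemma span_gen_le_span_glGen (hmn : m + 1 ≠ n) :
    Submodule.span ℂ (Set.range fun q : Ind (m + 1) n × Ind (m + 1) n => gen pI q.1 q.2) ≤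
      Submodule.span ℂ (Set.range glGen) := by
  have slGen_mem (γ : SlGen m n) : slGen γ ∈ Submodule.span ℂ (Set.range glGen) :=
    Submodule.subset_span ⟨some γ, rfl⟩
  rw [Submodule.span_le]
  rintro _ ⟨⟨i, j⟩, rfl⟩
  obtain rfl | ⟨a, rfl⟩ := eq_z0_or_exists_eq_emb i <;>
    obtain rfl | ⟨b, rfl⟩ := eq_z0_or_exists_eq_emb j
  · exact gen_z0_z0_mem_span_glGen hmn
  · exact slGen_mem (.row b)
  · exact slGen_mem (.col a)
  · obtain rfl | hab := eq_or_ne a b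
    · have hgen : gen pI (emb a) (emb a) =
          (-1 : ℂ) ^ pI a • (gen pI z0 z0 - slGen (.mid a a)) := by
        rw [slGen, if_pos rfl, sub_sub_cancel, smul_smul, neg_one_pow_mul_neg_one_pow_self,
          one_smul]
      change gen pI (emb a) (emb a) ∈ _
      rw [hgen]
      exact Submodule.smul_mem _ _ (sub_mem (gen_z0_z0_mem_span_glGen hmn) (slGen_mem _))
    · simpa [slGen, hab] using slGen_mem (.mid a b)

variable (m n) in
/-- Exponents of the Poincaré–Birkhoff–Witt monomials of `U(sl(m+1|n))`: multisets of basis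
elements in which the odd ones are not repeated. -/
abbrev PBWIndex := {s : Multiset (SlGen m n) // ∀ γ, Odd γ.parity → s.count γ ≤ 1}

/-- A listing of a multiset of basis elements of `sl(m+1|n)` in which the `e_{a0}` come first. -/
def normalOrder (s : Multiset (SlGen m n)) : List (SlGen m n) :=
  (s.filter fun γ => γ.isCol).toList ++ (s.filter fun γ => ¬ γ.isCol).toList

/-- The ordered monomials in the basis of `sl(m+1|n)`. -/
def slMonomial (s : Multiset (SlGen m n)) : UEA (Ind (m + 1) n) pI :=
  ((normalOrder s).map slGen).prod

lemma coe_normalOrder (s : Multiset (SlGen m n)) : (normalOrder s : Multiset (SlGen m n)) = s := by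
  rw [normalOrder, ← Multiset.coe_add, Multiset.coe_toList, Multiset.coe_toList,
    Multiset.filter_add_not]

lemma pairwise_normalOrder (s : Multiset (SlGen m n)) :
    (normalOrder s).Pairwise fun γ δ => δ.isCol → γ.isCol := by
  refine List.pairwise_append.mpr ⟨List.pairwise_of_forall_mem_list ?_,
    List.pairwise_of_forall_mem_list ?_, ?_⟩ <;> simp +contextual

variable (m n) in
/-- The two-sided ideal of `U(gl(m+1|n))` generated by `G₁`, as a subspace. -/
def idealG1 : Submodule ℂ (UEA (Ind (m + 1) n) pI) :=
  Submodule.span ℂ {y | ∃ u v, y = u * G1 (Ind (m + 1) n) pI * v}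

lemma exists_map_some_eq {α : Type*} {s : Multiset (Option α)} (hs : none ∉ s) :
    ∃ t : Multiset α, t.map some = s := by
  induction s using Multiset.induction with
  | empty => exact ⟨0, rfl⟩
  | cons a s ih =>
    obtain ⟨t, rfl⟩ := ih (mt Multiset.mem_cons_of_mem hs)
    obtain ⟨a, rfl⟩ := Option.ne_none_iff_exists'.mp
      (ne_of_mem_of_not_mem (Multiset.mem_cons_self a _) hs)
    exact ⟨a ::ₘ t, Multiset.map_cons _ _ _⟩

lemma prod_map_glGen_mem_idealG1 {l : List (Option (SlGen m n))} (hl : none ∈ l) :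
    (l.map glGen).prod ∈ idealG1 m n := by
  obtain ⟨l₁, l₂, rfl⟩ := List.append_of_mem hl
  exact Submodule.subset_span ⟨(l₁.map glGen).prod, (l₂.map glGen).prod, by
    simp [glGen, mul_assoc]⟩

theorem idealG1_sup_span_slMonomial (hmn : m + 1 ≠ n) :
    idealG1 m n ⊔ Submodule.span ℂ (Set.range fun s : PBWIndex m n => slMonomial s.1) = ⊤ := by
  have bracket_mem (γ δ : Option (SlGen m n)) := span_gen_le_span_glGen hmn
    ((isGlFamily_gen pI).supercommutator_mem (glGen_mem_homogeneousPart γ)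
      (glGen_mem_homogeneousPart δ))
  refine eq_top_of_forall_exists_prod_mem (g := glGen) (odd := fun γ => Odd (γ.elim 0 SlGen.parity))
    (fun γ δ => ⟨_, bracket_mem γ δ⟩) (fun γ hγ => ?_) ?_ fun s hs => ?_
  · have hsq : glGen γ * glGen γ = (2⁻¹ : ℂ) • (glGen γ * glGen γ -
        (-1 : ℂ) ^ (γ.elim 0 SlGen.parity * γ.elim 0 SlGen.parity) • (glGen γ * glGen γ)) := by
      rw [(hγ.mul hγ).neg_one_pow]
      module
    rw [hsq]
    exact Submodule.smul_mem _ _ (bracket_mem γ γ)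
  · rw [← top_le_iff, ← adjoin_range_gen, Algebra.adjoin_le_iff]
    exact Submodule.span_le.mp ((span_gen_le_span_glGen hmn).trans (Algebra.span_le_adjoin ℂ _))
  · by_cases hnone : none ∈ s
    · exact ⟨s.toList, s.coe_toList, Submodule.mem_sup_left
        (prod_map_glGen_mem_idealG1 (Multiset.mem_toList.mpr hnone))⟩
    · obtain ⟨s, rfl⟩ := exists_map_some_eq hnone
      refine ⟨(normalOrder s).map some, by rw [← Multiset.map_coe, coe_normalOrder],
        Submodule.mem_sup_right (Submodule.subset_span ⟨⟨s, fun γ hγ => ?_⟩, ?_⟩)⟩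
      · simpa [Multiset.count_map_eq_count' _ _ (Option.some_injective _)] using hs (some γ) hγ
      · simp only [slMonomial, List.map_map]
        rfl

end PBW

section WeightFiltration

variable {Z : Type*} {wt : Z → ℤ}

variable (wt) in
/-- The operators on the space with basis `Z` that lower the weight `wt` by at most `r`. -/
def loweringBy (r : ℤ) : Submodule ℂ (Module.End ℂ (Z →₀ ℂ)) where
  carrier := {T | ∀ z z', T (Finsupp.single z 1) z' ≠ 0 → wt z ≤ wt z' + r}
  zero_mem' _ _ h := absurd rfl h
  add_mem' {S T} hS hT z z' h := by
    by_contra hlt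
    exact h (by simp [not_imp_comm.mp (hS z z') hlt, not_imp_comm.mp (hT z z') hlt])
  smul_mem' c T hT z z' h := hT z z' (right_ne_zero_of_mul h)

lemma loweringBy_mono {r s : ℤ} (h : r ≤ s) : loweringBy wt r ≤ loweringBy wt s :=
  fun _ hT z z' hz => (hT z z' hz).trans (by lia)

lemma one_mem_loweringBy : (1 : Module.End ℂ (Z →₀ ℂ)) ∈ loweringBy wt 0 := by
  intro z z' h
  rw [Module.End.one_apply, Finsupp.single_apply_ne_zero] at h
  rw [h.1, add_zero]

lemma mul_mem_loweringBy {S T : Module.End ℂ (Z →₀ ℂ)} {r s : ℤ} (hS : S ∈ loweringBy wt r)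
    (hT : T ∈ loweringBy wt s) : S * T ∈ loweringBy wt (r + s) := by
  intro z z' h
  have hsum : (S * T) (Finsupp.single z 1) z' =
      ∑ y ∈ (T (Finsupp.single z 1)).support,
        T (Finsupp.single z 1) y * S (Finsupp.single y 1) z' := by
    conv_lhs => rw [Module.End.mul_apply, ← (T (Finsupp.single z 1)).sum_single, Finsupp.sum,
      map_sum, Finsupp.finsetSum_apply]
    refine Finset.sum_congr rfl fun y _ => ?_
    rw [← Finsupp.smul_single_one y (T (Finsupp.single z 1) y), map_smul, Finsupp.smul_apply,
      smul_eq_mul]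
  rw [hsum] at h
  obtain ⟨y, -, hy⟩ := Finset.exists_ne_zero_of_sum_ne_zero h
  have hzy := hT z y (left_ne_zero_of_mul hy)
  have hyz' := hS y z' (right_ne_zero_of_mul hy)
  lia

lemma tensorOp_mem_loweringBy {X : Type*} {B : Module.End ℂ (Z →₀ ℂ)} {r : ℤ}
    (A : Module.End ℂ (X →₀ ℂ)) (hB : B ∈ loweringBy wt r) :
    tensorOp A B ∈ loweringBy (fun z : X × Z => wt z.2) r := by
  intro z z' h
  rw [tensorOp_single, finsuppTensorFinsupp'_apply_apply] at h
  exact hB _ _ (right_ne_zero_of_mul h)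

variable (wt) in
/-- `L` lowers the weight `wt` by at most `r`, and `T` differs from it by an operator which lowers
the weight by less. -/
def IsLeadingTerm (r : ℤ) (T L : Module.End ℂ (Z →₀ ℂ)) : Prop :=
  L ∈ loweringBy wt r ∧ ∃ E ∈ loweringBy wt (r - 1), T = L + E

namespace IsLeadingTerm

variable {T L T' L' : Module.End ℂ (Z →₀ ℂ)} {r s : ℤ}

lemma refl (hL : L ∈ loweringBy wt r) : IsLeadingTerm wt r L L :=
  ⟨hL, 0, zero_mem _, (add_zero L).symm⟩

lemma mem_loweringBy (h : IsLeadingTerm wt r T L) : T ∈ loweringBy wt r := by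
  obtain ⟨hL, E, hE, rfl⟩ := h
  exact add_mem hL (loweringBy_mono (by lia) hE)

lemma add_left (h : IsLeadingTerm wt r T L) (hT' : T' ∈ loweringBy wt (r - 1)) :
    IsLeadingTerm wt r (T' + T) L := by
  obtain ⟨hL, E, hE, rfl⟩ := h
  exact ⟨hL, T' + E, add_mem hT' hE, add_left_comm _ _ _⟩

lemma smul (h : IsLeadingTerm wt r T L) (c : ℂ) : IsLeadingTerm wt r (c • T) (c • L) := by
  obtain ⟨hL, E, hE, rfl⟩ := h
  exact ⟨Submodule.smul_mem _ c hL, c • E, Submodule.smul_mem _ c hE, smul_add c L E⟩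

lemma tensorOp {X : Type*} (h : IsLeadingTerm wt r T L) (A : Module.End ℂ (X →₀ ℂ)) :
    IsLeadingTerm (fun z : X × Z => wt z.2) r (tensorOp A T) (tensorOp A L) := by
  obtain ⟨hL, E, hE, rfl⟩ := h
  exact ⟨tensorOp_mem_loweringBy A hL, _, tensorOp_mem_loweringBy A hE, map_add _ L E⟩

lemma mul (h : IsLeadingTerm wt r T L) (h' : IsLeadingTerm wt s T' L') :
    IsLeadingTerm wt (r + s) (T * T') (L * L') := by
  have hT' := h'.mem_loweringBy
  obtain ⟨hL, E, hE, rfl⟩ := h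
  obtain ⟨hL', E', hE', rfl⟩ := h'
  refine ⟨mul_mem_loweringBy hL hL', L * E' + E * (L' + E'),
    add_mem (loweringBy_mono ?_ (mul_mem_loweringBy hL hE'))
      (loweringBy_mono ?_ (mul_mem_loweringBy hE hT')), ?_⟩
  · lia
  · lia
  · rw [add_mul, mul_add, add_assoc]

lemma list_prod {Γ : Type*} {T L : Γ → Module.End ℂ (Z →₀ ℂ)} {r : Γ → ℤ}
    (h : ∀ γ, IsLeadingTerm wt (r γ) (T γ) (L γ)) (l : List Γ) :
    IsLeadingTerm wt (l.map r).sum (l.map T).prod (l.map L).prod := by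
  induction l with
  | nil => exact refl one_mem_loweringBy
  | cons γ l ih => simpa using (h γ).mul ih

end IsLeadingTerm

end WeightFiltration

section MonomialOperator

variable {Z σ : Type*} {e : Z → σ → ℕ} {odd : σ → Prop} {T T' : Module.End ℂ (Z →₀ ℂ)}
  {α β α' β' : σ → ℕ}

variable (e odd) in
/-- `T` acts on the space with basis `Z` as a nonzero multiple of the normally ordered monomial
`x^β ∂^α`, where `e z` is the exponent vector of the basis vector `z`, whose entries at the odd
indices are at most `1`: it removes `α`, then adds `β`, and kills exactly those basis vectors on
which this is impossible. -/
def IsMonomialOp (T : Module.End ℂ (Z →₀ ℂ)) (α β : σ → ℕ) : Prop :=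
  ∀ z, ∃ c z', T (Finsupp.single z 1) = Finsupp.single z' c ∧ (c ≠ 0 → e z' + α = e z + β) ∧
    (c ≠ 0 ↔ α ≤ e z ∧ ∀ i, odd i → e z i + β i ≤ α i + 1)

namespace IsMonomialOp

lemma smul (h : IsMonomialOp e odd T α β) {c : ℂ} (hc : c ≠ 0) :
    IsMonomialOp e odd (c • T) α β := by
  intro z
  obtain ⟨c', z', hT, he, hc'⟩ := h z
  refine ⟨c * c', z', ?_, ?_, ?_⟩
  · rw [LinearMap.smul_apply, hT, Finsupp.smul_single, smul_eq_mul]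
  · exact fun hcc => he (right_ne_zero_of_mul hcc)
  · rw [← hc', mul_ne_zero_iff, and_iff_right hc]

lemma one (he : ∀ z i, odd i → e z i ≤ 1) : IsMonomialOp e odd 1 0 0 :=
  fun z => ⟨1, z, rfl, fun _ => rfl, by simpa [Pi.le_def] using he z⟩

lemma of_add_single [DecidableEq σ] {i : σ} (he : ∀ z j, odd j → e z j ≤ 1)
    (h : ∀ z, ∃ c z', T (Finsupp.single z 1) = Finsupp.single z' c ∧
      (c ≠ 0 → e z' = Function.update (e z) i (e z i + 1)) ∧ (c ≠ 0 ↔ (odd i → e z i = 0))) :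
    IsMonomialOp e odd T 0 (Pi.single i 1) := by
  intro z
  obtain ⟨c, z', hT, hz', hc⟩ := h z
  refine ⟨c, z', hT, fun hcc => funext fun j => ?_, hc.trans ⟨fun hi => ?_, fun hi hodd => ?_⟩⟩
  · rw [hz' hcc]
    by_cases hj : j = i <;> simp [hj]
  · refine ⟨fun _ => Nat.zero_le _, fun j hodd => ?_⟩
    by_cases hj : j = i
    · subst hj
      simp [hi hodd]
    · simpa [hj] using he z j hodd
  · simpa using hi.2 i hodd

lemma of_sub_single [DecidableEq σ] {i : σ} (he : ∀ z j, odd j → e z j ≤ 1)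
    (h : ∀ z, ∃ c z', T (Finsupp.single z 1) = Finsupp.single z' c ∧
      (c ≠ 0 → e z' = Function.update (e z) i (e z i - 1)) ∧ (c ≠ 0 ↔ e z i ≠ 0)) :
    IsMonomialOp e odd T (Pi.single i 1) 0 := by
  intro z
  obtain ⟨c, z', hT, hz', hc⟩ := h z
  refine ⟨c, z', hT, fun hcc => funext fun j => ?_, hc.trans ⟨fun hi => ?_, fun hi => ?_⟩⟩
  · rw [hz' hcc]
    by_cases hj : j = i
    · subst hj
      simpa using Nat.succ_pred_eq_of_ne_zero (hc.mp hcc)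
    · simp [hj]
  · refine ⟨fun j => ?_, fun j hodd => (he z j hodd).trans (Nat.le_add_left _ _)⟩
    by_cases hj : j = i
    · subst hj
      simpa using Nat.one_le_iff_ne_zero.mpr hi
    · simp [hj]
  · simpa using Nat.one_le_iff_ne_zero.mp (by simpa using hi.1 i)

lemma mul (h' : IsMonomialOp e odd T' α' β') (h : IsMonomialOp e odd T α β)
    (he : ∀ z i, odd i → e z i ≤ 1) (hdisj : ∀ i, α' i = 0 ∨ β i = 0) :
    IsMonomialOp e odd (T' * T) (α' + α) (β' + β) := by
  intro z
  obtain ⟨c, y, hT, hy, hc⟩ := h z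
  obtain ⟨c', x, hT', hx, hc'⟩ := h' y
  have hTT' : (T' * T) (Finsupp.single z 1) = Finsupp.single x (c * c') := by
    rw [Module.End.mul_apply, hT, ← Finsupp.smul_single_one, map_smul, hT', Finsupp.smul_single,
      smul_eq_mul]
  refine ⟨c * c', x, hTT', fun hcc => ?_, ?_⟩
  · rw [← add_assoc, hx (right_ne_zero_of_mul hcc), add_right_comm,
      hy (left_ne_zero_of_mul hcc), add_assoc, add_comm β β']
  rw [mul_ne_zero_iff]
  constructor
  · rintro ⟨hcz, hcy⟩
    obtain ⟨hαz, hβz⟩ := hc.mp hcz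
    obtain ⟨hαy, hβy⟩ := hc'.mp hcy
    have hyz (i : σ) : e y i + α i = e z i + β i := congrFun (hy hcz) i
    refine ⟨fun i => ?_, fun i hi => ?_⟩
    · have := hαz i; have := hαy i; have := hyz i; have := hdisj i
      simp only [Pi.add_apply]
      lia
    · have := hβz i hi; have := hβy i hi; have := hyz i
      simp only [Pi.add_apply]
      lia
  · rintro ⟨hαz, hβz⟩
    simp only [Pi.le_def, Pi.add_apply] at hαz hβz
    have hcz : c ≠ 0 := hc.mpr ⟨fun i => (Nat.le_add_left _ _).trans (hαz i), fun i hi => by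
      have := hβz i hi; have := he z i hi; have := hdisj i; lia⟩
    have hyz (i : σ) : e y i + α i = e z i + β i := congrFun (hy hcz) i
    refine ⟨hcz, hc'.mpr ⟨fun i => ?_, fun i hi => ?_⟩⟩
    · have := hαz i; have := hyz i; lia
    · have := hβz i hi; have := hyz i; lia

lemma list_prod {Γ : Type*} {L : Γ → Module.End ℂ (Z →₀ ℂ)} {α β : Γ → σ → ℕ}
    (h : ∀ γ, IsMonomialOp e odd (L γ) (α γ) (β γ)) (he : ∀ z i, odd i → e z i ≤ 1) {l : List Γ}
    (hl : l.Pairwise fun γ δ => ∀ i, α γ i = 0 ∨ β δ i = 0) :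
    IsMonomialOp e odd (l.map L).prod (l.map α).sum (l.map β).sum := by
  induction l with
  | nil => exact one he
  | cons γ l ih =>
    rw [List.pairwise_cons] at hl
    simp only [List.map_cons, List.prod_cons, List.sum_cons]
    refine (h γ).mul (ih hl.2) he fun i => ?_
    refine or_iff_not_imp_left.mpr fun hi => ?_
    rw [← Pi.evalAddMonoidHom_apply (fun _ => ℕ) i (l.map β).sum, map_list_sum,
      List.sum_eq_zero_iff]
    simpa using fun δ hδ => (hl.1 δ hδ i).resolve_left hi

lemma tensorOp {Y τ : Type*} {e' : Y → τ → ℕ} {odd' : τ → Prop} {α' β' : τ → ℕ}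
    {T' : Module.End ℂ (Y →₀ ℂ)} (h : IsMonomialOp e odd T α β)
    (h' : IsMonomialOp e' odd' T' α' β') :
    IsMonomialOp (fun z : Z × Y => Sum.elim (e z.1) (e' z.2)) (Sum.elim odd odd') (tensorOp T T')
      (Sum.elim α α') (Sum.elim β β') := by
  rintro ⟨z, y⟩
  obtain ⟨c, x, hT, hx, hc⟩ := h z
  obtain ⟨c', x', hT', hx', hc'⟩ := h' y
  refine ⟨c * c', (x, x'), ?_, fun hcc => ?_, ?_⟩
  · rw [tensorOp_single, hT, hT', finsuppTensorFinsupp'_single_tmul_single]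
  · rw [← Sum.elim_add_add, hx (left_ne_zero_of_mul hcc), hx' (right_ne_zero_of_mul hcc),
      Sum.elim_add_add]
  · simp only [mul_ne_zero_iff, hc, hc', Sum.elim_le_elim_iff, Sum.forall, Sum.elim_inl,
      Sum.elim_inr, and_and_and_comm]

lemma mem_loweringBy (h : IsMonomialOp e odd T α β) (w : (σ → ℕ) →+ ℤ) :
    T ∈ loweringBy (fun z => w (e z)) (w α - w β) := by
  intro z z' hz
  obtain ⟨c, x, hT, hx, -⟩ := h z
  rw [hT, Finsupp.single_apply_ne_zero] at hz
  have hw := congrArg w (hz.1 ▸ hx hz.2)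
  rw [map_add, map_add] at hw
  lia

end IsMonomialOp

end MonomialOperator

lemma linearIndependent_of_triangular {ι κ R M : Type*} [Ring R] [IsDomain R] [AddCommGroup M]
    [Module R M] [LinearOrder κ] {v : ι → M} (key : ι → κ) (f : ι → M →ₗ[R] R)
    (hdiag : ∀ i, f i (v i) ≠ 0) (hlower : ∀ i j, key j ≤ key i → j ≠ i → f i (v j) = 0) :
    LinearIndependent R v := by
  classical
  rw [linearIndependent_iff']
  by_contra! ⟨s, c, hsum, i, hi, hci⟩
  obtain ⟨k, hk, hmax⟩ := (s.filter fun j => c j ≠ 0).exists_max_image key ⟨i, by simp [hi, hci]⟩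
  have hks := Finset.mem_filter.mp hk
  have hfk : ∑ j ∈ s, c j * f k (v j) = c k * f k (v k) :=
    Finset.sum_eq_single_of_mem k hks.1 fun j hj hjk => by
      by_cases hcj : c j = 0
      · rw [hcj, zero_mul]
      · rw [hlower k j (hmax j (by simp [hj, hcj])) hjk, mul_zero]
  refine mul_ne_zero hks.2 (hdiag k) ?_
  simpa only [map_sum, map_smul, smul_eq_mul, map_zero, hfk] using congrArg (f k) hsum

section MonomialIndependence

variable {Z σ ι : Type*} {e : Z → σ → ℕ} {odd : σ → Prop}

lemma IsMonomialOp.eq_add_of_coeff_ne_zero {T : Module.End ℂ (Z →₀ ℂ)} {α β : σ → ℕ} {z z' : Z}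
    (h : IsMonomialOp e odd T α β) (hz : T (Finsupp.single z 1) z' ≠ 0) :
    e z' + α = e z + β ∧ α ≤ e z := by
  obtain ⟨c, x, hT, hx, hc⟩ := h z
  rw [hT, Finsupp.single_apply_ne_zero] at hz
  exact ⟨hz.1 ▸ hx hz.2, (hc.mp hz.2).1⟩

lemma IsMonomialOp.exists_coeff_ne_zero {T : Module.End ℂ (Z →₀ ℂ)} {α β : σ → ℕ} {z : Z}
    (h : IsMonomialOp e odd T α β) (hβ : ∀ i, odd i → β i ≤ 1) (hz : e z = α) :
    ∃ z', e z' = β ∧ T (Finsupp.single z 1) z' ≠ 0 := by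
  subst hz
  obtain ⟨c, x, hT, hx, hc⟩ := h z
  have hc0 : c ≠ 0 := hc.mpr ⟨le_rfl, fun i hi => Nat.add_le_add_left (hβ i hi) _⟩
  refine ⟨x, add_right_cancel ((hx hc0).trans (add_comm _ _)), ?_⟩
  rwa [hT, Finsupp.single_eq_same]

/-- Each operator is detected by a coefficient of its leading monomial operator. Among the monomial
operators whose `∂`-part has maximal weight, that coefficient sees only the ones whose `∂`-part
divides its own, hence the second, reversed component of the key. -/
lemma IsMonomialOp.linearIndependent_of_isLeadingTerm [Finite σ]
    {T L : ι → Module.End ℂ (Z →₀ ℂ)} {α β : ι → σ → ℕ} {w : (σ → ℕ) →+ ℤ}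
    (hL : ∀ s, IsMonomialOp e odd (L s) (α s) (β s))
    (hT : ∀ s, IsLeadingTerm (fun z => w (e z)) (w (α s)) (T s) (L s))
    (hβw : ∀ s, w (β s) = 0) (hα : ∀ s, ∃ z, e z = α s) (hβ : ∀ s i, odd i → β s i ≤ 1)
    (hinj : Function.Injective fun s => (α s, β s)) : LinearIndependent ℂ T := by
  cases nonempty_fintype σ
  choose z hz using hα
  choose z' hz' hcoeff using fun s => (hL s).exists_coeff_ne_zero (hβ s) (hz s)
  have coeff_eq {s S} (hs : w (α s) ≤ w (α S)) :
      T s (Finsupp.single (z S) 1) (z' S) = L s (Finsupp.single (z S) 1) (z' S) := by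
    obtain ⟨-, E, hE, hTs⟩ := hT s
    rw [hTs, LinearMap.add_apply, Finsupp.add_apply, add_eq_left]
    by_contra hne
    have hlt : w (e (z S)) ≤ w (e (z' S)) + (w (α s) - 1) := hE _ _ hne
    rw [hz, hz', hβw] at hlt
    lia
  let key (s : ι) : ℤ ×ₗ ℕᵒᵈ := toLex (w (α s), OrderDual.toDual (∑ i, α s i))
  let f (S : ι) : Module.End ℂ (Z →₀ ℂ) →ₗ[ℂ] ℂ :=
    Finsupp.lapply (z' S) ∘ₗ LinearMap.applyₗ (Finsupp.single (z S) 1)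
  refine linearIndependent_of_triangular (R := ℂ) (M := Module.End ℂ (Z →₀ ℂ)) (v := T) key f
    (fun S => (coeff_eq le_rfl).trans_ne (hcoeff S)) fun S s hkey hne => ?_
  rw [Prod.Lex.toLex_le_toLex'] at hkey
  refine (coeff_eq hkey.1).trans ?_
  by_contra hs
  obtain ⟨hadd, hle⟩ := (hL s).eq_add_of_coeff_ne_zero hs
  rw [hz, hz'] at hadd
  rw [hz] at hle
  have hw : w (α s) = w (α S) := by
    simpa [hβw] using congrArg w hadd
  have hαs : α s = α S := funext fun i =>
    (Finset.sum_eq_sum_iff_of_le fun j _ => hle j).mp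
      ((Finset.sum_le_sum fun j _ => hle j).antisymm (hkey.2 hw)) i (Finset.mem_univ i)
  refine hne (hinj (Prod.ext hαs ?_))
  rw [hαs, add_comm] at hadd
  exact (add_left_cancel hadd).symm

end MonomialIndependence

section Exponent

variable {m n : ℕ}

/-- The exponents of a monomial of `F` in the variables other than `t_0`. -/
def exponent (x : FMon m n) : Ind m n → ℕ := Sum.elim x.2.1 fun i => (x.2.2 i).toNat

lemma exponent_le_one (x : FMon m n) (i : Ind m n) (hi : Odd (pI i)) : exponent x i ≤ 1 := by
  obtain i | i := i
  · exact absurd hi (by simp [pI])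
  · exact Bool.toNat_le _

lemma exists_exponent_eq {f : Ind m n → ℕ} (hf : ∀ i, Odd (pI i) → f i ≤ 1) :
    ∃ x : FMon m n, exponent x = f := by
  refine ⟨(0, fun i => f (.inl i), fun i => f (.inr i) = 1), funext fun i => ?_⟩
  obtain i | i := i
  · rfl
  · have := hf (.inr i) (by simp [pI])
    obtain h | h := Nat.le_one_iff_eq_zero_or_eq_one.mp this <;> simp [exponent, h]

lemma exponent_update_even (x : FMon m n) (k : ℤ) (i : Fin m) (v : ℕ) :
    exponent (k, Function.update x.2.1 i v, x.2.2) =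
      Function.update (exponent x) (.inl i) v :=
  (Sum.update_elim_inl).symm

lemma exponent_update_odd (x : FMon m n) (k : ℤ) (i : Fin n) (v : Bool) :
    exponent (k, x.2.1, Function.update x.2.2 i v) =
      Function.update (exponent x) (.inr i) v.toNat := by
  rw [exponent, exponent, Sum.update_elim_inr]
  exact congrArg _ (Function.comp_update Bool.toNat _ _ _)

lemma isMonomialOp_opDiv (i : Ind m n) :
    IsMonomialOp exponent (fun j => Odd (pI j)) (opDiv i) 0 (Pi.single i 1) := by
  refine .of_add_single exponent_le_one fun x => ?_
  obtain i | i := i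
  · exact ⟨1, _, opDivE_fmono i x, fun _ => exponent_update_even .., by simp [pI]⟩
  cases hi : x.2.2 i with
  | true =>
    exact ⟨0, x, (opDivO_fmono i x).trans (by simp [hi]), by simp, by simp [pI, exponent, hi]⟩
  | false =>
    have hx := (opDivO_fmono i x).trans ((if_neg (by simp [hi])).trans
      (Finsupp.smul_single_one _ _))
    refine ⟨_, _, hx, fun _ => ?_, by simp [pI, exponent, hi]⟩
    rw [exponent_update_odd, show exponent x (.inr i) = 0 from congrArg Bool.toNat hi]
    rfl

lemma isMonomialOp_opPar_emb (i : Ind m n) :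
    IsMonomialOp exponent (fun j => Odd (pI j)) (opPar (emb i)) (Pi.single i 1) 0 := by
  refine .of_sub_single exponent_le_one fun x => ?_
  obtain i | i := i
  · exact ⟨x.2.1 i, _, (opParE_fmono i x).trans (Finsupp.smul_single_one _ _),
      fun _ => exponent_update_even .., Nat.cast_ne_zero⟩
  cases hi : x.2.2 i with
  | false =>
    exact ⟨0, x, (opParO_fmono i x).trans (by simp [hi]), by simp, by simp [exponent, hi]⟩
  | true =>
    have hx := (opParO_fmono i x).trans ((if_pos hi).trans (Finsupp.smul_single_one _ _))
    refine ⟨_, _, hx, fun _ => ?_, by simp [exponent, hi]⟩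
    rw [exponent_update_odd, show exponent x (.inr i) = 1 from congrArg Bool.toNat hi]
    rfl

lemma isMonomialOp_parityOp :
    IsMonomialOp (exponent (m := m) (n := n)) (fun j => Odd (pI j)) parityOp 0 0 := by
  refine fun x => ⟨(-1) ^ cntA x.2.2, x, (parityOp_fmono x).trans (Finsupp.smul_single_one _ _),
    fun _ => rfl, ?_⟩
  simpa [pI] using fun j => exponent_le_one x (.inr j) odd_one

lemma isMonomialOp_parityOp_pow (k : ℕ) :
    IsMonomialOp (exponent (m := m) (n := n)) (fun j => Odd (pI j)) (parityOp ^ k) 0 0 := by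
  induction k with
  | zero => exact .one exponent_le_one
  | succ k ih =>
    rw [pow_succ]
    exact ih.mul isMonomialOp_parityOp exponent_le_one fun _ => .inl rfl

end Exponent

section BilinearRepresentation

variable {m n m' n' : ℕ} {θ : Ind m n × Ind m n ≃ Ind m' n'}

variable (θ) in
/-- Left multiplication by `t_{θ(i,j)}/t_0 + δ_{ij}`. The shift by `δ_{ij}` is an automorphism of
the super Weyl algebra; it makes `t_0∂_{θ(i,j)}` the leading term of `bilinearOp θ i j`. -/
def shiftedMul (q : Ind m n × Ind m n) : Module.End ℂ (FSp m' n') :=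
  opDiv (θ q) + (if q.1 = q.2 then 1 else 0 : ℂ) • 1

variable (θ) in
/-- The operators by which `gl(m|n)` acts on the functions of a matrix of variables, labelled by
`θ`, with entries shifted by those of the identity matrix. -/
def bilinearOp (i j : Ind m n) : Module.End ℂ (FSp m' n') :=
  ∑ k, shiftedMul θ (k, i) * opPar (emb (θ (k, j)))

lemma isSuperWeyl_shiftedMul (hθ : ∀ q, Even (pI (θ q)) ↔ Even (pI q.1 + pI q.2)) :
    IsSuperWeyl (fun q => pI q.1 + pI q.2) (shiftedMul θ) fun q => opPar (emb (θ q)) :=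
  (isSuperWeyl_opDiv_opPar.comp θ.injective hθ).add_smul_one fun q hq => by
    obtain h | h := em (q.1 = q.2)
    · exact h ▸ ⟨_, rfl⟩
    · exact absurd (if_neg h) hq

lemma isGlFamily_bilinearOp (hθ : ∀ q, Even (pI (θ q)) ↔ Even (pI q.1 + pI q.2)) :
    IsGlFamily pI (bilinearOp θ) :=
  (isSuperWeyl_shiftedMul hθ).isGlFamily_sum

variable (θ) in
/-- A representation of `D'(m|n) ⊗ U(gl(m|n))` on `F ⊗ F'` in which `D'(m|n)` acts on `F`, and
`gl(m|n)` acts on `F'` by the operators `bilinearOp θ i j`, up to the Koszul sign. -/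
structure SuperTensor.IsBilinearRep (ST : SuperTensor m n)
    (Θ : ST.T →ₐ[ℂ] Module.End ℂ (FMon m n × FMon m' n' →₀ ℂ)) : Prop where
  map_inD (d : Dprime m n) : Θ (ST.inD d) = tensorOp d.1 1
  map_inU_gen (i j : Ind m n) :
    Θ (ST.inU (gen pI i j)) = tensorOp (parityOp ^ (pI i + pI j)) (bilinearOp θ i j)

lemma SuperTensor.exists_isBilinearRep (ST : SuperTensor m n)
    (hθ : ∀ q, Even (pI (θ q)) ↔ Even (pI q.1 + pI q.2)) : ∃ Θ, ST.IsBilinearRep θ Θ := by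
  obtain ⟨β, hβ⟩ := ((isGlFamily_bilinearOp hθ).tensorOp_parity
    (parityOp_mul_self (m := m) (n := n))).exists_algHom
  let α : Dprime m n →ₐ[ℂ] Module.End ℂ (FMon m n × FMon m' n' →₀ ℂ) :=
    (tensorOpLeft _ _).comp (Dprime m n).val
  have hα (d : Dprime m n) : α d = tensorOp d.1 1 := rfl
  have koszul (i j k) {T : Dprime m n} (h : parityOp * T.1 = (-1 : ℂ) ^ k • (T.1 * parityOp)) :
      β (gen pI i j) * α T = (-1 : ℂ) ^ ((pI i + pI j) * k) • (α T * β (gen pI i j)) := by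
    rw [hβ, hα, tensorOp_mul, tensorOp_mul, parityOp_pow_mul_comm h, map_smul, one_mul, mul_one]
    rfl
  obtain ⟨Θ, hD, hU⟩ := ST.exists_lift (A := Module.End ℂ (FMon m n × FMon m' n' →₀ ℂ))
    ⟨fun i j k => koszul i j (pI k) (T := tdiv k) (parityOp_mul_opDiv k),
      fun i j k => koszul i j (pI k) (T := tpar k) (parityOp_mul_opPar k)⟩
  exact ⟨Θ, hD, fun i j => (hU _).trans (hβ i j)⟩

end BilinearRepresentation

section LeadingTerm

variable {m n m' n' : ℕ} {θ : Ind m n × Ind m n ≃ Ind m' n'}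

/-- The weight of the variable labelled by `q`. Diagonal variables are heavier, so that `e_{aa}`
provides the leading term in the image `t_a∂_0 - ∑ j, ± t_j/t_0 e_{aj}` of `e_{a0}`. -/
def pairWeight (q : Ind m n × Ind m n) : ℤ := if q.1 = q.2 then 3 else 2

lemma two_le_pairWeight (q : Ind m n × Ind m n) : 2 ≤ pairWeight q := by
  unfold pairWeight; split_ifs <;> norm_num

lemma pairWeight_le_three (q : Ind m n × Ind m n) : pairWeight q ≤ 3 := by
  unfold pairWeight; split_ifs <;> norm_num

variable (θ) in
/-- The total weight of an exponent vector in the variables labelled by `θ`. -/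
def exponentWeight : (Ind m' n' → ℕ) →+ ℤ where
  toFun f := ∑ q, pairWeight q * f (θ q)
  map_zero' := by simp
  map_add' f g := by simp [mul_add, Finset.sum_add_distrib]

lemma exponentWeight_single (q : Ind m n × Ind m n) :
    exponentWeight θ (Pi.single (θ q) 1) = pairWeight q := by
  simp [exponentWeight, Pi.single_apply]

variable (θ) in
/-- The total weight of a monomial in the variables labelled by `θ`. -/
def monomialWeight (y : FMon m' n') : ℤ := exponentWeight θ (exponent y)

lemma opPar_mem_loweringBy (q : Ind m n × Ind m n) :
    opPar (emb (θ q)) ∈ loweringBy (monomialWeight θ) (pairWeight q) := by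
  have h := (isMonomialOp_opPar_emb (θ q)).mem_loweringBy (exponentWeight θ)
  rwa [exponentWeight_single, map_zero, sub_zero] at h

lemma opDiv_mem_loweringBy (q : Ind m n × Ind m n) :
    opDiv (θ q) ∈ loweringBy (monomialWeight θ) (-pairWeight q) := by
  have h := (isMonomialOp_opDiv (θ q)).mem_loweringBy (exponentWeight θ)
  rwa [exponentWeight_single, map_zero, zero_sub] at h

lemma bilinearOp_eq (i j : Ind m n) :
    bilinearOp θ i j =
      ∑ k, opDiv (θ (k, i)) * opPar (emb (θ (k, j))) + opPar (emb (θ (i, j))) := by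
  simp only [bilinearOp, shiftedMul, add_mul, Finset.sum_add_distrib]
  refine congrArg _ ((Finset.sum_eq_single_of_mem i (Finset.mem_univ i) fun k _ hk => ?_).trans ?_)
  · rw [if_neg hk]
    exact (congrArg (· * _) (zero_smul ℂ _)).trans (zero_mul _)
  · rw [if_pos rfl, one_smul, one_mul]

lemma isLeadingTerm_bilinearOp (i j : Ind m n) :
    IsLeadingTerm (monomialWeight θ) (pairWeight (i, j)) (bilinearOp θ i j)
      (opPar (emb (θ (i, j)))) := by
  rw [bilinearOp_eq]
  refine (IsLeadingTerm.refl (opPar_mem_loweringBy (i, j))).add_left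
    (sum_mem fun k _ => loweringBy_mono ?_
      (mul_mem_loweringBy (opDiv_mem_loweringBy (k, i)) (opPar_mem_loweringBy (k, j))))
  linarith [two_le_pairWeight (k, i), pairWeight_le_three (k, j), two_le_pairWeight (i, j)]

namespace IsPhi

variable {ST : SuperTensor m n} {R : ST.T} {φ : UEA (Ind (m + 1) n) pI →ₐ[ℂ] ST.T}

lemma exists_map_slGen_mid (hφ : IsPhi ST R φ) (a b : Ind m n) :
    ∃ d, φ (slGen (.mid a b)) =
      ST.inD d + (if a = b then -(-1 : ℂ) ^ pI a else 1) • ST.inU (gen pI a b) := by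
  obtain ⟨hmid, -, -, hzero⟩ := hφ
  by_cases hab : a = b
  · subst hab
    have hsign : (-1 : ℂ) ^ pI a * (-1) ^ (pI a * pI a) = 1 := by
      rw [neg_one_pow_congr (m := pI a * pI a) (n := pI a) (by simp [Nat.even_mul]),
        neg_one_pow_mul_neg_one_pow_self]
    refine ⟨tdel z0 z0 - (-1 : ℂ) ^ pI a • tdel (emb a) (emb a), ?_⟩
    rw [slGen, if_pos rfl, if_pos rfl, map_sub, map_smul, hmid, if_pos rfl, hzero, map_sub,
      map_smul, smul_add, smul_add, smul_smul, hsign]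
    module
  · refine ⟨tdel (emb a) (emb b), ?_⟩
    rw [slGen, if_neg hab, if_neg hab, hmid, if_neg hab, add_zero, one_smul]

lemma map_slGen_col (hφ : IsPhi ST R φ) (a : Ind m n) :
    φ (slGen (.col a)) =
      ∑ j ∈ Finset.univ.erase a,
          (-(-1 : ℂ) ^ (pI a * pI j)) • (ST.inD (tdiv j) * ST.inU (gen pI a j)) +
        (ST.inD (tdel (emb a) z0) +
          (-(-1 : ℂ) ^ (pI a * pI a)) • (ST.inD (tdiv a) * ST.inU (gen pI a a))) := by
  rw [slGen, hφ.2.1, ← Finset.sum_erase_add _ _ (Finset.mem_univ a)]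
  simp only [neg_smul, Finset.sum_neg_distrib]
  abel

end IsPhi

/-- The weight of the leading operator of a basis element of `sl(m+1|n)`. -/
def SlGen.weight : SlGen m n → ℤ
  | col _ => 3
  | mid a b => pairWeight (a, b)
  | row _ => 0

variable (θ) in
/-- The leading operator, in the representation on `F ⊗ F'`, of a basis element of `sl(m+1|n)`. -/
def leadOp : SlGen m n → Module.End ℂ (FMon m n × FMon m' n' →₀ ℂ)
  | .col a => (-(-1 : ℂ) ^ (pI a * pI a)) •
      tensorOp (opDiv a * parityOp ^ (pI a + pI a)) (opPar (emb (θ (a, a))))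
  | .mid a b => (if a = b then -(-1 : ℂ) ^ pI a else 1) •
      tensorOp (parityOp ^ (pI a + pI b)) (opPar (emb (θ (a, b))))
  | .row b => tensorOp (opPar (emb b)) 1

namespace SuperTensor.IsBilinearRep

variable {ST : SuperTensor m n} {R : ST.T} {φ : UEA (Ind (m + 1) n) pI →ₐ[ℂ] ST.T}
  {Θ : ST.T →ₐ[ℂ] Module.End ℂ (FMon m n × FMon m' n' →₀ ℂ)}

lemma map_inD_mem_loweringBy (hΘ : ST.IsBilinearRep θ Θ) (d : Dprime m n) {r : ℤ} (hr : 0 ≤ r) :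
    Θ (ST.inD d) ∈ loweringBy (fun z => monomialWeight θ z.2) r := by
  rw [hΘ.map_inD]
  exact loweringBy_mono hr (tensorOp_mem_loweringBy d.1 one_mem_loweringBy)

lemma isLeadingTerm_inD_mul_inU_gen (hΘ : ST.IsBilinearRep θ Θ) (d : Dprime m n)
    (i j : Ind m n) :
    IsLeadingTerm (fun z => monomialWeight θ z.2) (pairWeight (i, j))
      (Θ (ST.inD d * ST.inU (gen pI i j)))
      (tensorOp (d.1 * parityOp ^ (pI i + pI j)) (opPar (emb (θ (i, j))))) := by
  rw [map_mul, hΘ.map_inD, hΘ.map_inU_gen, tensorOp_mul, one_mul]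
  exact (isLeadingTerm_bilinearOp i j).tensorOp _

lemma isLeadingTerm_slGen_col (hΘ : ST.IsBilinearRep θ Θ) (hφ : IsPhi ST R φ) (a : Ind m n) :
    IsLeadingTerm (fun z => monomialWeight θ z.2) 3 (Θ (φ (slGen (.col a))))
      (leadOp θ (.col a)) := by
  have hdiag : pairWeight (a, a) = 3 := if_pos rfl
  have hoff {j : Ind m n} (hj : j ∈ Finset.univ.erase a) : pairWeight (a, j) = 3 - 1 :=
    if_neg (Finset.ne_of_mem_erase hj).symm
  rw [hφ.map_slGen_col, map_add, map_add, map_sum, map_smul]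
  simp only [map_smul]
  refine .add_left (.add_left (.smul ?_ _) (hΘ.map_inD_mem_loweringBy _ (by norm_num)))
    (sum_mem fun j hj => Submodule.smul_mem _ _ ?_)
  · exact hdiag ▸ hΘ.isLeadingTerm_inD_mul_inU_gen (tdiv a) a a
  · exact hoff hj ▸ (hΘ.isLeadingTerm_inD_mul_inU_gen (tdiv j) a j).mem_loweringBy

lemma isLeadingTerm_slGen_mid (hΘ : ST.IsBilinearRep θ Θ) (hφ : IsPhi ST R φ) (a b : Ind m n) :
    IsLeadingTerm (fun z => monomialWeight θ z.2) (pairWeight (a, b))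
      (Θ (φ (slGen (.mid a b)))) (leadOp θ (.mid a b)) := by
  obtain ⟨d, hd⟩ := hφ.exists_map_slGen_mid a b
  rw [hd, map_add, map_smul, hΘ.map_inU_gen, leadOp]
  refine .add_left (((isLeadingTerm_bilinearOp a b).tensorOp _).smul _)
    (hΘ.map_inD_mem_loweringBy d ?_)
  linarith [two_le_pairWeight (a, b)]

lemma map_slGen_row (hΘ : ST.IsBilinearRep θ Θ) (hφ : IsPhi ST R φ) (b : Ind m n) :
    Θ (φ (slGen (.row b))) = leadOp θ (.row b) := by
  rw [slGen, hφ.2.2.1, hΘ.map_inD, leadOp]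
  exact congrArg (tensorOp · 1) (one_mul _)

lemma isLeadingTerm_slGen (hΘ : ST.IsBilinearRep θ Θ) (hφ : IsPhi ST R φ) :
    ∀ γ : SlGen m n, IsLeadingTerm (fun z => monomialWeight θ z.2) γ.weight (Θ (φ (slGen γ)))
      (leadOp θ γ)
  | .col a => hΘ.isLeadingTerm_slGen_col hφ a
  | .mid a b => hΘ.isLeadingTerm_slGen_mid hφ a b
  | .row b => by
    rw [hΘ.map_slGen_row hφ]
    exact .refl (tensorOp_mem_loweringBy _ one_mem_loweringBy)

end SuperTensor.IsBilinearRep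

end LeadingTerm

section Independence

variable {m n m' n' : ℕ} {θ : Ind m n × Ind m n ≃ Ind m' n'}

namespace SlGen

variable (θ) in
/-- The exponents of the derivatives in the leading operator of a basis element of `sl(m+1|n)`. -/
def removed : SlGen m n → Ind m n ⊕ Ind m' n' → ℕ
  | col a => Sum.elim 0 (Pi.single (θ (a, a)) 1)
  | mid a b => Sum.elim 0 (Pi.single (θ (a, b)) 1)
  | row b => Sum.elim (Pi.single b 1) 0

/-- The exponents of the variables in the leading operator of a basis element of `sl(m+1|n)`. -/
def added : SlGen m n → Ind m n ⊕ Ind m' n' → ℕ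
  | col a => Sum.elim (Pi.single a 1) 0
  | mid _ _ => 0
  | row _ => 0

lemma sum_map_removed_inl (s : Multiset (SlGen m n)) (b : Ind m n) :
    (s.map (removed θ)).sum (.inl b) = s.count (row b) := by
  induction s using Multiset.induction_on with
  | empty => rfl
  | cons γ s ih =>
    rw [Multiset.map_cons, Multiset.sum_cons, Pi.add_apply, ih, Multiset.count_cons, add_comm]
    cases γ <;> simp [removed, Pi.single_apply]

lemma sum_map_removed_inr (s : Multiset (SlGen m n)) (a b : Ind m n) :
    (s.map (removed θ)).sum (.inr (θ (a, b))) =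
      s.count (mid a b) + if a = b then s.count (col a) else 0 := by
  induction s using Multiset.induction_on with
  | empty => simp
  | cons γ s ih =>
    rw [Multiset.map_cons, Multiset.sum_cons, Pi.add_apply, ih, Multiset.count_cons,
      Multiset.count_cons]
    cases γ <;> simp [removed, Pi.single_apply] <;> grind

lemma sum_map_added_inl (s : Multiset (SlGen m n)) (a : Ind m n) :
    (s.map (added (m' := m') (n' := n'))).sum (.inl a) = s.count (col a) := by
  induction s using Multiset.induction_on with
  | empty => rfl
  | cons γ s ih =>
    rw [Multiset.map_cons, Multiset.sum_cons, Pi.add_apply, ih, Multiset.count_cons, add_comm]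
    cases γ <;> simp [added, Pi.single_apply]

lemma added_inr (γ : SlGen m n) (i : Ind m' n') : added γ (.inr i) = 0 := by
  cases γ <;> rfl

lemma sum_map_added_inr (s : Multiset (SlGen m n)) (i : Ind m' n') :
    (s.map added).sum (.inr i) = 0 := by
  induction s using Multiset.induction_on with
  | empty => rfl
  | cons γ s ih => rw [Multiset.map_cons, Multiset.sum_cons, Pi.add_apply, ih, added_inr]

lemma removed_eq_zero_or_added_eq_zero {γ δ : SlGen m n} (h : δ.isCol → γ.isCol)
    (i : Ind m n ⊕ Ind m' n') : removed θ γ i = 0 ∨ added δ i = 0 := by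
  obtain i | i := i
  · cases δ with
    | col a =>
      cases γ with
      | col a' => exact .inl rfl
      | mid a' b' => exact absurd (h rfl) Bool.false_ne_true
      | row b' => exact absurd (h rfl) Bool.false_ne_true
    | mid a b => exact .inr rfl
    | row b => exact .inr rfl
  · exact .inr (added_inr δ i)

lemma eq_of_sum_map_removed_eq_of_sum_map_added_eq {s t : Multiset (SlGen m n)}
    (hrem : (s.map (removed θ)).sum = (t.map (removed θ)).sum)
    (hadd : (s.map (added (m' := m') (n' := n'))).sum = (t.map added).sum) : s = t := by
  have hcol (a : Ind m n) : s.count (col a) = t.count (col a) := by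
    simpa only [sum_map_added_inl] using congrFun hadd (.inl a)
  refine Multiset.ext.mpr fun γ => ?_
  cases γ with
  | col a => exact hcol a
  | mid a b =>
    have hab := congrFun hrem (.inr (θ (a, b)))
    rw [sum_map_removed_inr, sum_map_removed_inr, hcol] at hab
    exact add_right_cancel hab
  | row b => simpa only [sum_map_removed_inl] using congrFun hrem (.inl b)

end SlGen

/-- The exponents of a monomial of `F ⊗ F'` in the variables other than the two `t_0`. -/
def pairExponent (z : FMon m n × FMon m' n') : Ind m n ⊕ Ind m' n' → ℕ :=
  Sum.elim (exponent z.1) (exponent z.2)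

/-- The indices of the odd variables of `F ⊗ F'`. -/
def pairOdd : Ind m n ⊕ Ind m' n' → Prop := Sum.elim (fun i => Odd (pI i)) fun i => Odd (pI i)

lemma pairExponent_le_one (z : FMon m n × FMon m' n') :
    ∀ i, pairOdd i → pairExponent z i ≤ 1
  | .inl i => exponent_le_one z.1 i
  | .inr i => exponent_le_one z.2 i

lemma exists_pairExponent_eq {f : Ind m n ⊕ Ind m' n' → ℕ} (hf : ∀ i, pairOdd i → f i ≤ 1) :
    ∃ z : FMon m n × FMon m' n', pairExponent z = f := by
  obtain ⟨x, hx⟩ := exists_exponent_eq fun i => hf (.inl i)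
  obtain ⟨y, hy⟩ := exists_exponent_eq fun i => hf (.inr i)
  exact ⟨(x, y), by rw [pairExponent, hx, hy]; exact Sum.elim_comp_inl_inr f⟩

lemma isMonomialOp_leadOp (γ : SlGen m n) :
    IsMonomialOp pairExponent pairOdd (leadOp θ γ) (γ.removed θ) γ.added := by
  cases γ with
  | col a =>
    have h := (isMonomialOp_opDiv a).mul (isMonomialOp_parityOp_pow (pI a + pI a))
      exponent_le_one fun _ => .inr rfl
    rw [add_zero, add_zero] at h
    exact (h.tensorOp (isMonomialOp_opPar_emb (θ (a, a)))).smul (by simp)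
  | mid a b =>
    have h := (isMonomialOp_parityOp_pow (m := m) (n := n) (pI a + pI b)).tensorOp
      (isMonomialOp_opPar_emb (θ (a, b)))
    rw [Sum.elim_zero_zero] at h
    exact h.smul (by split_ifs <;> simp)
  | row b =>
    have h := (isMonomialOp_opPar_emb b).tensorOp
      (IsMonomialOp.one (exponent_le_one (m := m') (n := n')))
    rwa [Sum.elim_zero_zero] at h

variable (θ) in
/-- The total weight of an exponent vector in the second set of variables. -/
def pairExponentWeight : (Ind m n ⊕ Ind m' n' → ℕ) →+ ℤ :=
  (exponentWeight θ).comp (LinearMap.funLeft ℕ ℕ Sum.inr).toAddMonoidHom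

lemma pairExponentWeight_removed (γ : SlGen m n) :
    pairExponentWeight θ (γ.removed θ) = γ.weight := by
  cases γ with
  | col a => exact (exponentWeight_single _).trans (if_pos rfl)
  | mid a b => exact exponentWeight_single _
  | row b => exact map_zero (exponentWeight θ)

lemma pairExponentWeight_added (γ : SlGen m n) : pairExponentWeight θ γ.added = 0 := by
  cases γ <;> exact map_zero (exponentWeight θ)

lemma sum_map_normalOrder {M : Type*} [AddCommMonoid M] (f : SlGen m n → M)
    (s : Multiset (SlGen m n)) : ((normalOrder s).map f).sum = (s.map f).sum := by
  rw [← Multiset.sum_coe, ← Multiset.map_coe, coe_normalOrder]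

lemma isMonomialOp_prod_leadOp (s : Multiset (SlGen m n)) :
    IsMonomialOp pairExponent pairOdd ((normalOrder s).map (leadOp θ)).prod
      (s.map (SlGen.removed θ)).sum (s.map SlGen.added).sum := by
  rw [← sum_map_normalOrder, ← sum_map_normalOrder]
  exact .list_prod isMonomialOp_leadOp pairExponent_le_one
    ((pairwise_normalOrder s).imp SlGen.removed_eq_zero_or_added_eq_zero)

lemma pairExponentWeight_sum_map_removed (s : Multiset (SlGen m n)) :
    pairExponentWeight θ (s.map (SlGen.removed θ)).sum = (s.map SlGen.weight).sum := by
  rw [map_multiset_sum, Multiset.map_map]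
  exact congrArg _ (Multiset.map_congr rfl fun γ _ => pairExponentWeight_removed γ)

lemma pairExponentWeight_sum_map_added (s : Multiset (SlGen m n)) :
    pairExponentWeight θ (s.map SlGen.added).sum = 0 := by
  simp [map_multiset_sum, pairExponentWeight_added]

lemma PBWIndex.sum_map_removed_le_one (hθ : ∀ q, Even (pI (θ q)) ↔ Even (pI q.1 + pI q.2))
    (s : PBWIndex m n) : ∀ i, pairOdd i → (s.1.map (SlGen.removed θ)).sum i ≤ 1
  | .inl b, hb => (SlGen.sum_map_removed_inl s.1 b).trans_le (s.2 (.row b) hb)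
  | .inr i, hi => by
    obtain ⟨⟨a, b⟩, rfl⟩ := θ.surjective i
    have hodd : Odd (pI a + pI b) := by
      rwa [← Nat.not_even_iff_odd, ← hθ (a, b), Nat.not_even_iff_odd]
    have hab : a ≠ b := by
      rintro rfl
      exact Nat.not_even_iff_odd.mpr hodd (Even.add_self _)
    rw [SlGen.sum_map_removed_inr, if_neg hab, add_zero]
    exact s.2 (.mid a b) hodd

lemma PBWIndex.sum_map_added_le_one (s : PBWIndex m n) :
    ∀ i, pairOdd i → (s.1.map (SlGen.added (m' := m') (n' := n'))).sum i ≤ 1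
  | .inl a, ha => (SlGen.sum_map_added_inl s.1 a).trans_le (s.2 (.col a) ha)
  | .inr i, _ => (SlGen.sum_map_added_inr s.1 i).trans_le zero_le_one

variable {ST : SuperTensor m n} {R : ST.T} {φ : UEA (Ind (m + 1) n) pI →ₐ[ℂ] ST.T}

lemma SuperTensor.IsBilinearRep.isLeadingTerm_slMonomial
    {Θ : ST.T →ₐ[ℂ] Module.End ℂ (FMon m n × FMon m' n' →₀ ℂ)} (hΘ : ST.IsBilinearRep θ Θ)
    (hφ : IsPhi ST R φ) (s : Multiset (SlGen m n)) :
    IsLeadingTerm (fun z => pairExponentWeight θ (pairExponent z))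
      (pairExponentWeight θ (s.map (SlGen.removed θ)).sum) (Θ (φ (slMonomial s)))
      ((normalOrder s).map (leadOp θ)).prod := by
  have hmap : Θ (φ (slMonomial s)) = ((normalOrder s).map fun γ => Θ (φ (slGen γ))).prod := by
    rw [slMonomial, map_list_prod, map_list_prod, List.map_map, List.map_map]
    rfl
  rw [pairExponentWeight_sum_map_removed, ← sum_map_normalOrder, hmap]
  exact .list_prod (hΘ.isLeadingTerm_slGen hφ) (normalOrder s)

theorem IsPhi.linearIndependent_map_slMonomial (hφ : IsPhi ST R φ) :
    LinearIndependent ℂ fun s : PBWIndex m n => φ (slMonomial s.1) := by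
  obtain ⟨m', n', θ, hθ⟩ := exists_equiv_ind fun q : Ind m n × Ind m n => pI q.1 + pI q.2
  obtain ⟨Θ, hΘ⟩ := ST.exists_isBilinearRep hθ
  refine .of_comp Θ.toLinearMap (IsMonomialOp.linearIndependent_of_isLeadingTerm
    (fun s => isMonomialOp_prod_leadOp s.1) (fun s => hΘ.isLeadingTerm_slMonomial hφ s.1)
    (fun s => pairExponentWeight_sum_map_added s.1)
    (fun s => exists_pairExponent_eq (s.sum_map_removed_le_one hθ))
    PBWIndex.sum_map_added_le_one fun s t hst => ?_)
  exact Subtype.ext (SlGen.eq_of_sum_map_removed_eq_of_sum_map_added_eq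
    (congrArg Prod.fst hst) (congrArg Prod.snd hst))

end Independence

lemma IsPhi.map_G1 {m n : ℕ} (hmn : m + 1 ≠ n) {ST : SuperTensor m n}
    {φ : UEA (Ind (m + 1) n) pI →ₐ[ℂ] ST.T} (hφ : IsPhi ST (R1elt ST) φ) :
    φ (G1 (Ind (m + 1) n) pI) = 0 := by
  have hdiag (a : Ind m n) : φ (gen pI (emb a) (emb a)) = ST.inD (tdel (emb a) (emb a)) +
      ST.inU (gen pI a a) + (-1 : ℂ) ^ pI a • R1elt ST := by
    rw [hφ.1, if_pos rfl, neg_one_pow_congr (m := pI a * pI a) (n := pI a)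
      (by simp [Nat.even_mul])]
  have hR : ((m : ℂ) - n + 1) • R1elt ST = -(ST.inD (En m n) + ST.inU (G1 (Ind m n) pI)) := by
    rw [R1elt, smul_smul, mul_neg, mul_one_div_cancel (cast_sub_cast_add_one_ne_zero hmn),
      neg_smul, one_smul]
  calc φ (G1 (Ind (m + 1) n) pI)
    _ = ST.inD (En m n) + ST.inU (G1 (Ind m n) pI) + ((m : ℂ) - n + 1) • R1elt ST := by
      rw [G1, G1, En, sum_eq_z0_add_sum_emb, sum_eq_z0_add_sum_emb, map_add, map_add, map_sum,
        map_sum, map_sum, hφ.2.2.2, Finset.sum_congr rfl fun a _ => hdiag a,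
        Finset.sum_add_distrib, Finset.sum_add_distrib, ← Finset.sum_smul, sum_neg_one_pow_pI,
        add_smul, one_smul]
      abel
    _ = 0 := by rw [hR, add_neg_cancel]

lemma IsPhi.idealG1_le_ker {m n : ℕ} (hmn : m + 1 ≠ n) {ST : SuperTensor m n}
    {φ : UEA (Ind (m + 1) n) pI →ₐ[ℂ] ST.T} (hφ : IsPhi ST (R1elt ST) φ) :
    idealG1 m n ≤ LinearMap.ker φ.toLinearMap := by
  refine Submodule.span_le.mpr ?_
  rintro _ ⟨u, v, rfl⟩
  simp [hφ.map_G1 hmn]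

/-- Theorem 6.1.  For `m+1 ≠ n`, the kernel of `φ_{R₁}` is the two-sided
ideal of `U(gl(m+1|n))` generated by the first Gelfand invariant `G₁ = Σ_{i∈Î} e_ii`. -/
theorem stmt16 (m n : ℕ) (hmn : m + 1 ≠ n) (ST : SuperTensor m n)
    (φ : UEA (Ind (m+1) n) pI →ₐ[ℂ] ST.T) (hφ : IsPhi ST (R1elt ST) φ) :
    ∀ x : UEA (Ind (m+1) n) pI, φ x = 0 ↔
      x ∈ Submodule.span ℂ {y : UEA (Ind (m+1) n) pI |
        ∃ u v : UEA (Ind (m+1) n) pI, y = u * G1 (Ind (m+1) n) pI * v} := by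
  have hind := hφ.linearIndependent_map_slMonomial
  have hker : idealG1 m n = LinearMap.ker φ.toLinearMap := by
    refine eq_of_le_of_inf_le_of_sup_le (hφ.idealG1_le_ker hmn)
      (z := Submodule.span ℂ (Set.range fun s : PBWIndex m n => slMonomial s.1)) ?_ ?_
    · exact (Submodule.range_ker_disjoint hind).symm.eq_bot.trans_le bot_le
    · exact le_top.trans (idealG1_sup_span_slMonomial hmn).ge
  exact fun x => (SetLike.ext_iff.mp hker x).symm
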